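/- arXiv:1703.01772 — 3 statements merged into one kernel-verified Lean document; each statement's English description precedes it below -/
import Mathlib

section
/- Assume α is irrational with irrationality measure 2, i.e. for every λ > 0 there is C(λ) > 0 such that |α − u/v| ≥ C(λ)·v^(−2−λ) for all u ∈ ℤ and all positive integers v. Fix r with 1/2 < r ≤ 1, reals ε₁ > ε₂ ≥ 0 and τ > 0. Then there is a constant C such that for all B ≥ 2: |M_r(ε₁,ε₂,B) − (6(ε₁−ε₂)/(π²·max(1,α²)))·B^(2−1/r)| ≤ C·B^(1−1/(2r)+τ). -/
open Real

/-- `zoomCount α r ε₁ ε₂ B` is the number of pairs `(u,v)`, `u ∈ ℤ`, `v` a positive integer,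
with `gcd(u,v) = 1`, `max(|u|,v) ≤ B` and `ε₂·B^(−1/r) < |u/v − α| ≤ ε₁·B^(−1/r)`. -/
noncomputable def zoomCount (α r ε₁ ε₂ B : ℝ) : ℕ :=
  Set.ncard {p : ℤ × ℕ | 0 < p.2 ∧ Int.gcd p.1 (p.2 : ℤ) = 1 ∧
    ((max |p.1| (p.2 : ℤ) : ℤ) : ℝ) ≤ B ∧
    ε₂ * B ^ (-(1 / r)) < |(p.1 : ℝ) / p.2 - α| ∧
    |(p.1 : ℝ) / p.2 - α| ≤ ε₁ * B ^ (-(1 / r))}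

/-!
Counting the integers `u` with `|u / v - α| ≤ δ` for each `v ≤ x` gives `δ x²` up to Birkhoff sums
of the sawtooth function over the rotations by `α + δ` and `δ - α`. If `p / q` is a good rational
approximation to `α`, then `q` consecutive terms of such a sum are nearly equidistributed modulo `1`
and add up to `O(1)`. Dirichlet's theorem and the Diophantine condition provide such a `q` with
`q ≤ n` and `n / q = O(n ^ lam)`, so that cutting `n` terms into blocks of length `q` leaves a
remainder of at most `n / 2` terms, and induction bounds the sum by `O(n ^ lam)`. This remains true
for every angle within `O(1 / Q²)` of `α` as long as `n ≤ Q`, where `Q = B ^ (1 / (2 r))` is the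
scale at which `δ = ε / Q²`.

Möbius inversion passes to primitive points: a truncated cone that is too short contains no integer
point, by the Diophantine condition again, so only `d = O((B / Q) B ^ lam)` contribute. Finally, the
conditions `max |u| v ≤ B` and `v ≤ B / max 1 |α|` agree for all but boundedly many points, because
`|u - v α| = O(1)` when `r ≤ 1`.
-/

/-- The sawtooth function `t ↦ {t} - 1/2`, the error term in counting integers of an interval. -/
noncomputable def sawtooth (t : ℝ) : ℝ := Int.fract t - 1 / 2

lemma sum_range_comp_add_mul_of_periodic {M : Type*} [AddCommMonoid M] {f : ℤ → M} {q : ℕ}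
    (hf : Function.Periodic f q) (hq : 0 < q) {p : ℤ} (hpq : IsCoprime p q) (m : ℤ) :
    ∑ j ∈ Finset.range q, f (m + j * p) = ∑ i ∈ Finset.range q, f i := by
  have hq' : (0 : ℤ) < q := by exact_mod_cast hq
  have hnonneg (j : ℕ) : 0 ≤ (m + j * p) % q := Int.emod_nonneg _ hq'.ne'
  have hmaps : ∀ j ∈ Finset.range q, ((m + j * p) % q).toNat ∈ Finset.range q := fun j _ ↦ by
    have := Int.emod_lt_of_pos (m + j * p) hq'
    rw [Finset.mem_range]
    omega
  have hinj : Set.InjOn (fun j : ℕ ↦ ((m + j * p) % q).toNat) (Finset.range q) := by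
    intro a ha b hb hab
    simp only [Finset.coe_range, Set.mem_Iio] at ha hb hab
    have hmod : m + b * p ≡ m + a * p [ZMOD q] := by
      have := hnonneg a
      have := hnonneg b
      exact (by omega : (m + b * p) % q = (m + a * p) % q)
    have hdvd : (q : ℤ) ∣ (a - b) * p := by simpa [sub_mul] using hmod.dvd
    have := Int.eq_zero_of_abs_lt_dvd (hpq.symm.dvd_of_dvd_mul_right hdvd) (by grind)
    omega
  refine Finset.sum_nbij (fun j ↦ ((m + j * p) % q).toNat) hmaps hinj
    (Finset.surjOn_of_injOn_of_card_le _ hmaps hinj le_rfl) fun j _ ↦ ?_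
  have hmod : (m + j * p) % q = m + j * p - (m + j * p) / q * q := by
    rw [Int.emod_def, mul_comm (q : ℤ)]
  rw [Int.toNat_of_nonneg (hnonneg j), hmod]
  exact (hf.sub_int_mul_eq _).symm

/-- The summands are the numbers `(i + {qy})/q` with `0 ≤ i < q`, in some order. -/
lemma sum_fract_add_mul_div {p : ℤ} {q : ℕ} (hq : 0 < q) (hpq : IsCoprime p q) (y : ℝ) :
    ∑ j ∈ Finset.range q, Int.fract (y + j * (p / q : ℝ)) = (q - 1) / 2 + Int.fract (q * y) := by
  have hq' : (0 : ℝ) < q := by exact_mod_cast hq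
  have hperiodic : Function.Periodic (fun i : ℤ ↦ Int.fract ((i + Int.fract (q * y)) / q)) q := by
    intro i
    have hshift : ((i + q : ℤ) + Int.fract (q * y)) / q = (i + Int.fract (q * y)) / q + 1 := by
      push_cast
      field_simp
      ring
    simp only [hshift, Int.fract_add_one]
  have hterm (j : ℕ) : y + j * (p / q : ℝ) =
      ((⌊q * y⌋ + j * p : ℤ) + Int.fract (q * y)) / q := by
    rw [eq_div_iff hq'.ne']
    push_cast
    rw [add_right_comm, Int.floor_add_fract]
    field_simp
  have hreduced : ∀ i ∈ Finset.range q, Int.fract (((i : ℤ) + Int.fract (q * y)) / q) =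
      (i + Int.fract (q * y)) / q := by
    intro i hi
    have hiq : (i : ℝ) + 1 ≤ q := by exact_mod_cast Finset.mem_range.mp hi
    have := Int.fract_nonneg (q * y)
    have := Int.fract_lt_one (q * y)
    rw [Int.cast_natCast, Int.fract_eq_self, div_lt_one hq']
    exact ⟨by positivity, by linarith⟩
  have hgauss : ∑ i ∈ Finset.range q, (i : ℝ) = q * (q - 1) / 2 := by
    have := congrArg (Nat.cast (R := ℝ)) (Finset.sum_range_id_mul_two q)
    push_cast [Nat.cast_pred hq] at this
    linarith
  simp only [hterm]
  rw [sum_range_comp_add_mul_of_periodic hperiodic hq hpq, Finset.sum_congr rfl hreduced,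
    ← Finset.sum_div, Finset.sum_add_distrib, hgauss, Finset.sum_const, Finset.card_range,
    nsmul_eq_mul]
  field_simp

lemma fract_add_sub_le_fract {a b h : ℝ} (hab : |a - b| ≤ h) :
    Int.fract (b + h) - 2 * h ≤ Int.fract a := by
  have hle := abs_le.mp hab
  have : (⌊a⌋ : ℝ) ≤ ⌊b + h⌋ := by exact_mod_cast Int.floor_mono (by linarith)
  unfold Int.fract
  linarith

lemma fract_le_fract_sub_add {a b h : ℝ} (hab : |a - b| ≤ h) :
    Int.fract a ≤ Int.fract (b - h) + 2 * h := by
  have hle := abs_le.mp hab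
  have : (⌊b - h⌋ : ℝ) ≤ ⌊a⌋ := by exact_mod_cast Int.floor_mono (by linarith)
  unfold Int.fract
  linarith

lemma birkhoffSum_add_right {M : Type*} [AddCommMonoid M] (g : ℝ → M) (β : ℝ) (n : ℕ) (x : ℝ) :
    birkhoffSum (· + β) g n x = ∑ j ∈ Finset.range n, g (x + j * β) := by
  simp only [birkhoffSum, add_right_iterate, nsmul_eq_mul]

lemma abs_birkhoffSum_sawtooth_le_of_abs_sub_div_le {β H : ℝ} {p : ℤ} {q : ℕ} (hq : 0 < q)
    (hpq : IsCoprime p q) (hβ : |β - p / q| ≤ H / q ^ 2) (x : ℝ) :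
    |birkhoffSum (· + β) sawtooth q x| ≤ 2 * H + 1 / 2 := by
  have : (0 : ℝ) < q := by exact_mod_cast hq
  have hclose : ∀ j ∈ Finset.range q, |(x + j * β) - (x + j * (p / q : ℝ))| ≤ H / q := by
    intro j hj
    have hjq : (j : ℝ) ≤ q := by exact_mod_cast (Finset.mem_range.mp hj).le
    calc |(x + j * β) - (x + j * (p / q : ℝ))| = j * |β - p / q| := by
          rw [add_sub_add_left_eq_sub, ← mul_sub, abs_mul, Nat.abs_cast]
      _ ≤ q * (H / q ^ 2) := by gcongr
      _ = H / q := by field_simp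
  have hlower : ∑ j ∈ Finset.range q, (Int.fract (x + H / q + j * (p / q : ℝ)) - 2 * (H / q)) ≤
      ∑ j ∈ Finset.range q, Int.fract (x + j * β) := Finset.sum_le_sum fun j hj ↦ by
    simpa only [add_right_comm] using fract_add_sub_le_fract (hclose j hj)
  have hupper : ∑ j ∈ Finset.range q, Int.fract (x + j * β) ≤
      ∑ j ∈ Finset.range q, (Int.fract (x - H / q + j * (p / q : ℝ)) + 2 * (H / q)) :=
    Finset.sum_le_sum fun j hj ↦ by
      simpa only [sub_add_eq_add_sub] using fract_le_fract_sub_add (hclose j hj)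
  have hconst : (q : ℝ) * (2 * (H / q)) = 2 * H := by field_simp
  rw [Finset.sum_sub_distrib, sum_fract_add_mul_div hq hpq, Finset.sum_const, Finset.card_range,
    nsmul_eq_mul, hconst] at hlower
  rw [Finset.sum_add_distrib, sum_fract_add_mul_div hq hpq, Finset.sum_const, Finset.card_range,
    nsmul_eq_mul, hconst] at hupper
  simp only [birkhoffSum_add_right, sawtooth, Finset.sum_sub_distrib, Finset.sum_const,
    Finset.card_range, nsmul_eq_mul]
  have := Int.fract_nonneg (q * (x + H / q))
  have := Int.fract_lt_one (q * (x - H / q))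
  rw [abs_le]
  constructor <;> linarith

lemma norm_birkhoffSum_le_div_mul_add {α E : Type*} [NormedAddCommGroup E] {f : α → α} {g : α → E}
    {q n : ℕ} {M R : ℝ} (hq : ∀ x, ‖birkhoffSum f g q x‖ ≤ M)
    (hmod : ∀ x, ‖birkhoffSum f g (n % q) x‖ ≤ R) (x : α) :
    ‖birkhoffSum f g n x‖ ≤ (n / q : ℕ) * M + R := by
  have hblocks (a : ℕ) : ∀ x, ‖birkhoffSum f g (q * a + n % q) x‖ ≤ a * M + R := by
    induction a with
    | zero => simpa using hmod
    | succ a ih =>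
      intro x
      rw [Nat.mul_succ, add_comm (q * a), add_assoc, birkhoffSum_add]
      calc _ ≤ ‖birkhoffSum f g q x‖ + ‖birkhoffSum f g (q * a + n % q) (f^[q] x)‖ :=
            norm_add_le _ _
        _ ≤ M + (a * M + R) := add_le_add (hq x) (ih _)
        _ = (a + 1 : ℕ) * M + R := by push_cast; ring
  simpa only [Nat.div_add_mod] using hblocks (n / q) x

/-- `α` has Diophantine type `2 + lam` with constant `C`: no fraction `u/v` is closer to `α` than
`C * v ^ (-(2 + lam))`. -/
structure IsDiophantineWith (lam C α : ℝ) : Prop where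
  pos : 0 < C
  le_abs_sub (u : ℤ) (v : ℕ) : 0 < v → C * (v : ℝ) ^ (-(2 + lam)) ≤ |α - u / v|

namespace IsDiophantineWith

variable {lam C α : ℝ}

lemma neg (hα : IsDiophantineWith lam C α) : IsDiophantineWith lam C (-α) where
  pos := hα.pos
  le_abs_sub u v hv := by
    have habs : |-α - u / v| = |α - (-u : ℤ) / v| := by
      rw [← abs_neg]
      push_cast
      ring_nf
    exact habs ▸ hα.le_abs_sub (-u) v hv

lemma le_rpow_mul_abs_sub (hα : IsDiophantineWith lam C α) (u : ℤ) {v : ℕ} (hv : 0 < v) :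
    C ≤ (v : ℝ) ^ (2 + lam) * |α - u / v| := by
  have hv' : (0 : ℝ) < v := by exact_mod_cast hv
  have h := hα.le_abs_sub u v hv
  rwa [rpow_neg hv'.le, ← div_eq_mul_inv, div_le_iff₀' (by positivity)] at h

lemma exists_coprime_approx (hα : IsDiophantineWith lam C α) (hlam : 0 ≤ lam) {Q : ℕ}
    (hQ : 0 < Q) :
    ∃ (p : ℤ) (q : ℕ), 0 < q ∧ q ≤ Q ∧ IsCoprime p q ∧ |α - p / q| ≤ 1 / (q : ℝ) ^ 2 ∧
      C * Q ≤ q * (Q : ℝ) ^ lam := by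
  obtain ⟨t, habs, hden⟩ := Real.exists_rat_abs_sub_le_and_den_le α hQ
  rw [Rat.cast_def] at habs
  have hq : (0 : ℝ) < t.den := by exact_mod_cast t.den_pos
  have hqQ : (t.den : ℝ) ≤ Q := by exact_mod_cast hden
  have hsharp : |α - t.num / t.den| ≤ 1 / (Q * t.den) :=
    habs.trans (by gcongr; linarith)
  refine ⟨t.num, t.den, t.den_pos, hden, ?_, ?_, ?_⟩
  · exact Int.isCoprime_iff_nat_coprime.mpr (by simpa using t.reduced)
  · exact hsharp.trans (by rw [sq]; gcongr)
  · have hQ' : (0 : ℝ) < Q := hq.trans_le hqQ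
    rw [← le_div_iff₀ hQ']
    calc C ≤ (t.den : ℝ) ^ (2 + lam) * |α - t.num / t.den| :=
          hα.le_rpow_mul_abs_sub t.num t.den_pos
      _ ≤ ((t.den : ℝ) ^ 2 * Q ^ lam) * (1 / (Q * t.den)) := by
          rw [rpow_add hq, rpow_two]
          gcongr
      _ = t.den * (Q : ℝ) ^ lam / Q := by field_simp

lemma exists_abs_birkhoffSum_sawtooth_le_add (hα : IsDiophantineWith lam C α) (hlam : 0 ≤ lam)
    {H β : ℝ} (hH : 0 ≤ H) {n : ℕ} (hn : 0 < n) (hβ : |β - α| ≤ H / n ^ 2) :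
    ∃ m : ℕ, 2 * m ≤ n ∧ ∀ R : ℝ, (∀ y, |birkhoffSum (· + β) sawtooth m y| ≤ R) →
      ∀ x, |birkhoffSum (· + β) sawtooth n x| ≤ (n : ℝ) ^ lam / C * (2 * (H + 1) + 1 / 2) + R := by
  obtain ⟨p, q, hq, hqn, hpq, happrox, hlarge⟩ := hα.exists_coprime_approx hlam hn
  have hq' : (0 : ℝ) < q := by exact_mod_cast hq
  have hqn' : (q : ℝ) ≤ n := by exact_mod_cast hqn
  have hβq : |β - p / q| ≤ (H + 1) / q ^ 2 := calc
    |β - p / q| ≤ |β - α| + |α - p / q| := abs_sub_le _ _ _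
    _ ≤ H / q ^ 2 + 1 / q ^ 2 := add_le_add (hβ.trans (by gcongr)) happrox
    _ = (H + 1) / q ^ 2 := by rw [add_div]
  have hblocks : ((n / q : ℕ) : ℝ) ≤ (n : ℝ) ^ lam / C := calc
    ((n / q : ℕ) : ℝ) ≤ n / q := Nat.cast_div_le
    _ ≤ (n : ℝ) ^ lam / C := by
      rw [div_le_div_iff₀ hq' hα.pos]
      linarith
  refine ⟨n % q, ?_, fun R hR x ↦ ?_⟩
  · have := Nat.mod_lt n hq
    have := Nat.div_add_mod n q
    have := Nat.le_mul_of_pos_right q (Nat.div_pos hqn hq)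
    omega
  · refine (norm_birkhoffSum_le_div_mul_add (g := sawtooth)
      (abs_birkhoffSum_sawtooth_le_of_abs_sub_div_le hq hpq hβq) hR x).trans ?_
    gcongr

lemma exists_abs_birkhoffSum_sawtooth_le_rpow (hα : IsDiophantineWith lam C α) (hlam : 0 < lam)
    {H : ℝ} (hH : 0 ≤ H) :
    ∃ A : ℝ, 0 ≤ A ∧ ∀ Q β : ℝ, |β - α| ≤ H / Q ^ 2 → ∀ n : ℕ, (n : ℝ) ≤ Q → ∀ x,
      |birkhoffSum (· + β) sawtooth n x| ≤ A * (n : ℝ) ^ lam := by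
  have hC := hα.pos
  set M := 2 * (H + 1) + 1 / 2
  set t : ℝ := (1 / 2) ^ lam
  have h1t : 0 < 1 - t := sub_pos.mpr (rpow_lt_one (by norm_num) (by norm_num) hlam)
  -- `A` is the fixed point of `a ↦ M / C + a * t`, which makes the induction close.
  set A := M / C / (1 - t) with hA
  have hfix : M / C + A * t = A := by rw [hA]; field_simp; ring
  have hA0 : 0 ≤ A := by positivity
  refine ⟨A, hA0, fun Q β hβ n ↦ ?_⟩
  induction n using Nat.strong_induction_on with
  | _ n ih =>
  intro hnQ x
  rcases n.eq_zero_or_pos with rfl | hn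
  · simpa using mul_nonneg hA0 (rpow_nonneg le_rfl lam)
  obtain ⟨m, hmn, hstep⟩ := hα.exists_abs_birkhoffSum_sawtooth_le_add hlam.le hH hn
    (hβ.trans (by gcongr))
  have hmn' : (m : ℝ) ≤ n * (1 / 2) := by
    have : (2 : ℝ) * m ≤ n := by exact_mod_cast hmn
    linarith
  have hrem (y : ℝ) : |birkhoffSum (· + β) sawtooth m y| ≤ A * ((n : ℝ) ^ lam * t) := by
    refine (ih m (by omega) (by linarith [n.cast_nonneg (α := ℝ)]) y).trans ?_
    rw [← mul_rpow n.cast_nonneg (by norm_num)]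
    gcongr
  calc |birkhoffSum (· + β) sawtooth n x|
      ≤ (n : ℝ) ^ lam / C * M + A * ((n : ℝ) ^ lam * t) := hstep _ hrem x
    _ = (M / C + A * t) * (n : ℝ) ^ lam := by ring
    _ = A * (n : ℝ) ^ lam := by rw [hfix]

lemma exists_abs_birkhoffSum_sawtooth_le (hα : IsDiophantineWith lam C α) (hlam : 0 < lam)
    {H : ℝ} (hH : 0 ≤ H) :
    ∃ A : ℝ, 0 ≤ A ∧ ∀ Q β : ℝ, 1 ≤ Q → |β - α| ≤ H / Q ^ 2 → ∀ (n : ℕ) (x : ℝ),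
      |birkhoffSum (· + β) sawtooth n x| ≤ A * (n / Q + 1) * Q ^ lam := by
  obtain ⟨A, hA, hshort⟩ := hα.exists_abs_birkhoffSum_sawtooth_le_rpow hlam hH
  refine ⟨2 * A, by positivity, fun Q β hQ hβ n x ↦ ?_⟩
  have hQ0 : 0 < Q := by linarith
  have hq : 0 < ⌊Q⌋₊ := Nat.floor_pos.mpr hQ
  have hqQ : (⌊Q⌋₊ : ℝ) ≤ Q := Nat.floor_le hQ0.le
  have hbound (k : ℕ) (hk : (k : ℝ) ≤ Q) (y : ℝ) :
      |birkhoffSum (· + β) sawtooth k y| ≤ A * Q ^ lam :=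
    (hshort Q β hβ k hk y).trans (by gcongr)
  have hmod : ((n % ⌊Q⌋₊ : ℕ) : ℝ) ≤ Q :=
    le_trans (by exact_mod_cast (Nat.mod_lt n hq).le) hqQ
  have hblocks : ((n / ⌊Q⌋₊ : ℕ) : ℝ) ≤ 2 * (n / Q) := by
    have hhalf : Q / 2 ≤ ⌊Q⌋₊ := by
      have := Nat.lt_floor_add_one Q
      have : (1 : ℝ) ≤ ⌊Q⌋₊ := by exact_mod_cast hq
      linarith
    calc ((n / ⌊Q⌋₊ : ℕ) : ℝ) ≤ n / ⌊Q⌋₊ := Nat.cast_div_le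
      _ ≤ n / (Q / 2) := by gcongr
      _ = 2 * (n / Q) := by field_simp
  calc |birkhoffSum (· + β) sawtooth n x|
      ≤ (n / ⌊Q⌋₊ : ℕ) * (A * Q ^ lam) + A * Q ^ lam :=
        norm_birkhoffSum_le_div_mul_add (g := sawtooth) (hbound _ hqQ) (hbound _ hmod) x
    _ ≤ 2 * (n / Q) * (A * Q ^ lam) + 2 * (A * Q ^ lam) := by
        have : 0 ≤ A * Q ^ lam := by positivity
        exact add_le_add (by gcongr) (by linarith)
    _ = 2 * A * (n / Q + 1) * Q ^ lam := by ring

end IsDiophantineWith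

/-- The integer points `(u, v)` with `v ∈ s` and `f v ≤ u ≤ g v`. -/
noncomputable def latticeStrip (s : Finset ℕ) (f g : ℕ → ℝ) : Finset (ℤ × ℕ) :=
  s.biUnion fun v ↦ Finset.Icc ⌈f v⌉ ⌊g v⌋ ×ˢ {v}

lemma mem_latticeStrip {s : Finset ℕ} {f g : ℕ → ℝ} {p : ℤ × ℕ} :
    p ∈ latticeStrip s f g ↔ p.2 ∈ s ∧ f p.2 ≤ p.1 ∧ (p.1 : ℝ) ≤ g p.2 := by
  obtain ⟨u, v⟩ := p
  simp only [latticeStrip, Finset.mem_biUnion, Finset.mem_product, Finset.mem_Icc,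
    Finset.mem_singleton, Int.ceil_le, Int.le_floor]
  constructor
  · rintro ⟨w, hw, huw, rfl⟩
    exact ⟨hw, huw⟩
  · exact fun ⟨hv, huv⟩ ↦ ⟨v, hv, huv, rfl⟩

lemma card_latticeStrip (s : Finset ℕ) (f g : ℕ → ℝ) :
    (latticeStrip s f g).card = ∑ v ∈ s, (Finset.Icc ⌈f v⌉ ⌊g v⌋).card := by
  have hdisj : (s : Set ℕ).PairwiseDisjoint fun v ↦ Finset.Icc ⌈f v⌉ ⌊g v⌋ ×ˢ {v} :=
    fun v _ w _ hvw ↦ Finset.disjoint_product.mpr <| .inr <| by simpa using hvw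
  rw [latticeStrip, Finset.card_biUnion hdisj]
  simp only [Finset.card_product, Finset.card_singleton, mul_one]

lemma card_Icc_ceil_floor {a b : ℝ} (hab : a ≤ b) :
    ((Finset.Icc ⌈a⌉ ⌊b⌋).card : ℝ) = b - a - sawtooth b - sawtooth (-a) := by
  have hle : ⌈a⌉ ≤ ⌊b⌋ + 1 := by
    rw [Int.ceil_le]
    push_cast
    exact hab.trans (Int.lt_floor_add_one b).le
  have hcard : ((Finset.Icc ⌈a⌉ ⌊b⌋).card : ℝ) = ⌊b⌋ + 1 - ⌈a⌉ := by
    exact_mod_cast Int.card_Icc_of_le _ _ hle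
  have hceil : (⌈a⌉ : ℝ) = -⌊-a⌋ := by rw [Int.floor_neg]; push_cast; ring
  rw [hcard, hceil, sawtooth, sawtooth, Int.fract, Int.fract]
  ring

lemma card_Icc_ceil_floor_le {a b : ℝ} (hab : a ≤ b) :
    ((Finset.Icc ⌈a⌉ ⌊b⌋).card : ℝ) ≤ b - a + 1 := by
  rw [card_Icc_ceil_floor hab, sawtooth, sawtooth]
  linarith [Int.fract_nonneg b, Int.fract_nonneg (-a)]

lemma sum_Icc_comp_mul_eq_birkhoffSum {M : Type*} [AddCommMonoid M] (g : ℝ → M) (β : ℝ) (n : ℕ) :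
    ∑ v ∈ Finset.Icc 1 n, g (v * β) = birkhoffSum (· + β) g n β := by
  rw [birkhoffSum_add_right, ← Finset.Ico_add_one_right_eq_Icc, Finset.sum_Ico_eq_sum_range]
  refine Finset.sum_congr rfl fun j _ ↦ congrArg g ?_
  push_cast
  ring

/-- The integer points of the truncated cone `0 < v ≤ x`, `|u / v - α| ≤ δ`, as a finite set of
pairs `(u, v)`. -/
noncomputable def conePoints (α δ x : ℝ) : Finset (ℤ × ℕ) :=
  latticeStrip (Finset.Icc 1 ⌊x⌋₊) (fun v ↦ v * (α - δ)) (fun v ↦ v * (α + δ))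

section conePoints

variable {α δ x : ℝ} {p : ℤ × ℕ}

lemma mem_conePoints_iff_mul_le :
    p ∈ conePoints α δ x ↔
      0 < p.2 ∧ (p.2 : ℝ) ≤ x ∧ p.2 * (α - δ) ≤ p.1 ∧ (p.1 : ℝ) ≤ p.2 * (α + δ) := by
  rw [conePoints, mem_latticeStrip, Finset.mem_Icc, and_assoc]
  exact and_congr_right fun hv ↦ by rw [Nat.le_floor_iff' (by omega)]

lemma mem_conePoints :
    p ∈ conePoints α δ x ↔ 0 < p.2 ∧ (p.2 : ℝ) ≤ x ∧ |(p.1 : ℝ) / p.2 - α| ≤ δ := by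
  rw [mem_conePoints_iff_mul_le]
  refine and_congr_right fun hv ↦ and_congr_right fun _ ↦ ?_
  have hv' : (0 : ℝ) < p.2 := by exact_mod_cast hv
  rw [abs_sub_le_iff, sub_le_iff_le_add', sub_le_comm, le_div_iff₀' hv', div_le_iff₀' hv', and_comm]

lemma card_conePoints (hδ : 0 ≤ δ) :
    ((conePoints α δ x).card : ℝ) = δ * (⌊x⌋₊ * (⌊x⌋₊ + 1)) -
      birkhoffSum (· + (α + δ)) sawtooth ⌊x⌋₊ (α + δ) -
      birkhoffSum (· + (δ - α)) sawtooth ⌊x⌋₊ (δ - α) := by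
  have hslice (v : ℕ) : ((Finset.Icc ⌈v * (α - δ)⌉ ⌊v * (α + δ)⌋).card : ℝ) =
      2 * δ * v - sawtooth (v * (α + δ)) - sawtooth (v * (δ - α)) := by
    rw [card_Icc_ceil_floor (by gcongr; linarith), ← mul_neg, neg_sub]
    ring
  have hgauss (n : ℕ) : ∑ v ∈ Finset.Icc 1 n, (v : ℝ) = n * (n + 1) / 2 := by
    induction n with
    | zero => simp
    | succ n ih =>
      rw [Finset.sum_Icc_succ_top (by omega), ih]
      push_cast
      ring
  rw [conePoints, card_latticeStrip, Nat.cast_sum]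
  simp only [hslice, Finset.sum_sub_distrib, sum_Icc_comp_mul_eq_birkhoffSum, ← Finset.mul_sum,
    hgauss]
  ring

lemma card_filter_dvd_gcd_conePoints {d : ℕ} (hd : 0 < d) :
    {p ∈ conePoints α δ x | d ∣ Int.gcd p.1 p.2}.card = (conePoints α δ (x / d)).card := by
  have hd' : (0 : ℝ) < d := by exact_mod_cast hd
  have hmul (u : ℤ) (v : ℕ) :
      ((d : ℤ) * u, d * v) ∈ conePoints α δ x ↔ (u, v) ∈ conePoints α δ (x / d) := by
    simp only [mem_conePoints]
    push_cast
    rw [mul_div_mul_left _ _ hd'.ne', le_div_iff₀' hd', Nat.mul_pos_iff_of_pos_left hd]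
  refine (Finset.card_nbij (fun p : ℤ × ℕ ↦ ((d : ℤ) * p.1, d * p.2)) ?_ ?_ ?_).symm
  · rintro ⟨u, v⟩ hp
    refine Finset.mem_filter.mpr ⟨(hmul u v).mpr hp, ?_⟩
    exact Int.dvd_gcd (dvd_mul_right _ _) (by push_cast; exact dvd_mul_right _ _)
  · rintro ⟨u, v⟩ - ⟨u', v'⟩ - heq
    simpa [hd.ne'] using heq
  · rintro ⟨u, v⟩ hp
    obtain ⟨hp, hdvd⟩ := Finset.mem_filter.mp hp
    have hdvd' := Int.natCast_dvd_natCast.mpr hdvd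
    obtain ⟨a, rfl⟩ : (d : ℤ) ∣ u := hdvd'.trans (Int.gcd_dvd_left _ _)
    obtain ⟨b, rfl⟩ := Int.natCast_dvd_natCast.mp (hdvd'.trans (Int.gcd_dvd_right _ _))
    exact ⟨(a, b), (hmul a b).mp hp, rfl⟩

end conePoints

lemma abs_floor_mul_floor_add_one_sub_sq_le {x : ℝ} (hx : 0 ≤ x) :
    |(⌊x⌋₊ * (⌊x⌋₊ + 1) - x ^ 2 : ℝ)| ≤ x := by
  have := Nat.floor_le hx
  have := Nat.lt_floor_add_one x
  have := (⌊x⌋₊).cast_nonneg (α := ℝ)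
  rw [abs_le]
  constructor <;> nlinarith

namespace IsDiophantineWith

variable {lam C α : ℝ}

lemma exists_abs_card_conePoints_sub_le (hα : IsDiophantineWith lam C α) (hlam : 0 < lam)
    {ε : ℝ} (hε : 0 ≤ ε) :
    ∃ D : ℝ, 0 ≤ D ∧ ∀ Q x : ℝ, 1 ≤ Q → 0 ≤ x →
      |((conePoints α (ε / Q ^ 2) x).card : ℝ) - ε / Q ^ 2 * x ^ 2| ≤
        D * (x / Q + 1) * Q ^ lam := by
  obtain ⟨A₁, hA₁, hsum₁⟩ := hα.exists_abs_birkhoffSum_sawtooth_le hlam hε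
  obtain ⟨A₂, hA₂, hsum₂⟩ := hα.neg.exists_abs_birkhoffSum_sawtooth_le hlam hε
  refine ⟨ε + A₁ + A₂, by positivity, fun Q x hQ hx ↦ ?_⟩
  have hQ0 : 0 < Q := by linarith
  set δ := ε / Q ^ 2 with hδ
  have hδ0 : 0 ≤ δ := by positivity
  have hnx : (⌊x⌋₊ : ℝ) ≤ x := Nat.floor_le hx
  have hright : |birkhoffSum (· + (α + δ)) sawtooth ⌊x⌋₊ (α + δ)| ≤ A₁ * (x / Q + 1) * Q ^ lam :=
    (hsum₁ Q _ hQ (by rw [add_sub_cancel_left, abs_of_nonneg hδ0]) _ _).trans (by gcongr)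
  have hleft : |birkhoffSum (· + (δ - α)) sawtooth ⌊x⌋₊ (δ - α)| ≤ A₂ * (x / Q + 1) * Q ^ lam :=
    (hsum₂ Q _ hQ (by rw [sub_neg_eq_add, sub_add_cancel, abs_of_nonneg hδ0]) _ _).trans
      (by gcongr)
  have hmain : |δ * (⌊x⌋₊ * (⌊x⌋₊ + 1)) - δ * x ^ 2| ≤ ε * (x / Q + 1) * Q ^ lam := calc
    |δ * (⌊x⌋₊ * (⌊x⌋₊ + 1)) - δ * x ^ 2| ≤ δ * x := by
      rw [← mul_sub, abs_mul, abs_of_nonneg hδ0]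
      gcongr
      exact abs_floor_mul_floor_add_one_sub_sq_le hx
    _ = ε * (x / Q) * (1 / Q) := by rw [hδ]; field_simp
    _ ≤ ε * (x / Q + 1) * 1 := by
      gcongr
      · linarith
      · rwa [div_le_one hQ0]
    _ ≤ ε * (x / Q + 1) * Q ^ lam := by
      gcongr
      exact one_le_rpow hQ hlam.le
  rw [card_conePoints hδ0]
  rw [abs_le] at *
  constructor <;> linarith

lemma le_rpow_mul_of_mem_conePoints (hα : IsDiophantineWith lam C α) (hlam : 0 ≤ lam) {δ x : ℝ}
    {p : ℤ × ℕ} (hp : p ∈ conePoints α δ x) : C ≤ x ^ (2 + lam) * δ := by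
  obtain ⟨hv, hvx, hclose⟩ := mem_conePoints.mp hp
  rw [abs_sub_comm] at hclose
  calc C ≤ (p.2 : ℝ) ^ (2 + lam) * |α - p.1 / p.2| := hα.le_rpow_mul_abs_sub p.1 hv
    _ ≤ x ^ (2 + lam) * δ := by
      have : 0 ≤ x := p.2.cast_nonneg.trans hvx
      gcongr

end IsDiophantineWith

lemma summable_div_sq {w : ℕ → ℝ} (hw : ∀ d, |w d| ≤ 1) :
    Summable fun d : ℕ ↦ w d / (d : ℝ) ^ 2 := by
  refine .of_norm_bounded (g := fun d : ℕ ↦ 1 / (d : ℝ) ^ 2)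
    (summable_one_div_nat_pow.mpr one_lt_two) fun d ↦ ?_
  rw [norm_div, norm_pow, Real.norm_natCast]
  gcongr
  exact hw d

lemma abs_tsum_div_sq_sub_sum_le {w : ℕ → ℝ} (hw : ∀ d, |w d| ≤ 1) {N : ℕ} (hN : N ≠ 0) :
    |∑' d : ℕ, w d / (d : ℝ) ^ 2 - ∑ d ∈ Finset.Ioc 0 N, w d / (d : ℝ) ^ 2| ≤ 1 / N := by
  have hIoc (m : ℕ) : ∑ d ∈ Finset.range (m + 1), w d / (d : ℝ) ^ 2 =
      ∑ d ∈ Finset.Ioc 0 m, w d / (d : ℝ) ^ 2 := by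
    rw [Finset.sum_range_succ', Nat.cast_zero, zero_pow two_ne_zero, div_zero, add_zero,
      Finset.range_eq_Ico, Finset.sum_Ico_add' fun d : ℕ ↦ w d / (d : ℝ) ^ 2]
    rfl
  have hlim := ((Filter.tendsto_add_atTop_iff_nat 1).mpr
    (summable_div_sq hw).hasSum.tendsto_sum_nat).sub_const
      (∑ d ∈ Finset.Ioc 0 N, w d / (d : ℝ) ^ 2)
  refine le_of_tendsto hlim.abs ?_
  filter_upwards [Filter.eventually_ge_atTop N] with m hm
  rw [hIoc, ← Finset.sum_Ioc_consecutive _ N.zero_le hm, add_sub_cancel_left]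
  calc |∑ d ∈ Finset.Ioc N m, w d / (d : ℝ) ^ 2| ≤ ∑ d ∈ Finset.Ioc N m, |w d / (d : ℝ) ^ 2| :=
        Finset.abs_sum_le_sum_abs _ _
    _ ≤ ∑ d ∈ Finset.Ioc N m, ((d : ℝ) ^ 2)⁻¹ := Finset.sum_le_sum fun d _ ↦ by
        rw [abs_div, abs_pow, Nat.abs_cast, ← one_div]
        gcongr
        exact hw d
    _ ≤ (N : ℝ)⁻¹ - (m : ℝ)⁻¹ := sum_Ioc_inv_sq_le_sub hN hm
    _ ≤ 1 / N := by rw [one_div]; exact sub_le_self _ (by positivity)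

lemma sum_Ioc_one_div_le_one_add_log (N : ℕ) :
    ∑ d ∈ Finset.Ioc 0 N, 1 / (d : ℝ) ≤ 1 + log N := by
  have h := harmonic_le_one_add_log N
  rw [harmonic_eq_sum_Icc, ← zero_add 1, Finset.Icc_add_one_left_eq_Ioc] at h
  push_cast at h
  simpa only [one_div] using h

lemma abs_sum_mul_comp_div_sub_le {w : ℕ → ℝ} (hw : ∀ d, |w d| ≤ 1) {f : ℝ → ℝ} {a b c : ℝ}
    (hb : 0 ≤ b) (hc : 0 ≤ c) (hf : ∀ y, 0 ≤ y → |f y - c * y ^ 2| ≤ a + b * y) {x : ℝ}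
    (hx : 0 ≤ x) {N : ℕ} (hN : N ≠ 0) :
    |∑ d ∈ Finset.Ioc 0 N, w d * f (x / d) - (∑' d : ℕ, w d / (d : ℝ) ^ 2) * (c * x ^ 2)| ≤
      N * a + b * x * (1 + log N) + c * x ^ 2 / N := by
  set S := ∑' d : ℕ, w d / (d : ℝ) ^ 2
  have hsplit : ∑ d ∈ Finset.Ioc 0 N, w d * f (x / d) - S * (c * x ^ 2) =
      ∑ d ∈ Finset.Ioc 0 N, w d * (f (x / d) - c * (x / d) ^ 2) -
        (S - ∑ d ∈ Finset.Ioc 0 N, w d / (d : ℝ) ^ 2) * (c * x ^ 2) := by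
    rw [sub_mul, Finset.sum_mul, sub_sub_eq_add_sub, ← Finset.sum_add_distrib]
    refine congrArg (· - _) (Finset.sum_congr rfl fun d _ ↦ ?_)
    ring
  have hterms : |∑ d ∈ Finset.Ioc 0 N, w d * (f (x / d) - c * (x / d) ^ 2)| ≤
      N * a + b * x * (1 + log N) := calc
    _ ≤ ∑ d ∈ Finset.Ioc 0 N, |w d * (f (x / d) - c * (x / d) ^ 2)| :=
        Finset.abs_sum_le_sum_abs _ _
    _ ≤ ∑ d ∈ Finset.Ioc 0 N, (a + b * x * (1 / d)) := Finset.sum_le_sum fun d _ ↦ by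
        rw [abs_mul]
        calc |w d| * |f (x / d) - c * (x / d) ^ 2| ≤ 1 * |f (x / d) - c * (x / d) ^ 2| := by
              gcongr
              exact hw d
          _ ≤ a + b * (x / d) := by
              rw [one_mul]
              exact hf _ (by positivity)
          _ = a + b * x * (1 / d) := by ring
    _ = N * a + b * x * ∑ d ∈ Finset.Ioc 0 N, 1 / (d : ℝ) := by
        rw [Finset.sum_add_distrib, ← Finset.mul_sum, Finset.sum_const, Nat.card_Ioc, Nat.sub_zero,
          nsmul_eq_mul]
    _ ≤ N * a + b * x * (1 + log N) := by
        gcongr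
        exact sum_Ioc_one_div_le_one_add_log N
  have htail : |(S - ∑ d ∈ Finset.Ioc 0 N, w d / (d : ℝ) ^ 2) * (c * x ^ 2)| ≤ c * x ^ 2 / N := by
    rw [abs_mul, abs_of_nonneg (by positivity : 0 ≤ c * x ^ 2), ← one_div_mul_eq_div]
    gcongr
    exact abs_tsum_div_sq_sub_sum_le hw hN
  rw [hsplit]
  exact (abs_sub _ _).trans (add_le_add hterms htail)

section Moebius

open scoped ArithmeticFunction.Moebius

lemma tsum_moebius_div_sq : ∑' d : ℕ, (μ d : ℝ) / (d : ℝ) ^ 2 = 6 / π ^ 2 := by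
  have hL : LSeries (fun n ↦ ((μ n : ℤ) : ℂ)) 2 =
      ((∑' d : ℕ, (μ d : ℝ) / (d : ℝ) ^ 2 : ℝ) : ℂ) := by
    rw [LSeries, Complex.ofReal_tsum]
    refine tsum_congr fun d ↦ ?_
    rcases eq_or_ne d 0 with rfl | hd
    · simp
    · simp [LSeries.term_of_ne_zero hd]
  have hinv := ArithmeticFunction.LSeries_zeta_mul_Lseries_moebius (s := 2) (by norm_num)
  rw [ArithmeticFunction.LSeries_zeta_eq_riemannZeta (by norm_num), riemannZeta_two, hL] at hinv
  have hinv' : π ^ 2 / 6 * ∑' d : ℕ, (μ d : ℝ) / (d : ℝ) ^ 2 = 1 := by exact_mod_cast hinv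
  rw [eq_div_iff (by positivity)]
  linarith

lemma card_filter_eq_one_eq_sum_moebius {ι : Type*} (s : Finset ι) {g : ι → ℕ} {N : ℕ}
    (hg : ∀ i ∈ s, g i ∈ Finset.Ioc 0 N) :
    ({i ∈ s | g i = 1}.card : ℤ) = ∑ d ∈ Finset.Ioc 0 N, μ d * ({i ∈ s | d ∣ g i}.card : ℤ) := by
  have hindicator : ∀ i ∈ s, (if g i = 1 then (1 : ℤ) else 0) =
      ∑ d ∈ Finset.Ioc 0 N, if d ∣ g i then μ d else 0 := by
    intro i hi
    obtain ⟨hpos, hle⟩ := Finset.mem_Ioc.mp (hg i hi)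
    have hdivisors : {d ∈ Finset.Ioc 0 N | d ∣ g i} = (g i).divisors := by
      ext d
      have := Nat.le_of_dvd hpos (m := d)
      have := Nat.pos_of_dvd_of_pos (m := d) (n := g i)
      grind
    rw [← Finset.sum_filter, hdivisors, ← ArithmeticFunction.coe_mul_zeta_apply,
      ArithmeticFunction.moebius_mul_coe_zeta, ArithmeticFunction.one_apply]
  rw [Finset.card_filter]
  push_cast
  rw [Finset.sum_congr rfl hindicator, Finset.sum_comm]
  refine Finset.sum_congr rfl fun d _ ↦ ?_
  rw [← Finset.sum_filter, Finset.sum_const, nsmul_eq_mul, mul_comm]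

/-- The primitive integer points of the truncated cone `0 < v ≤ x`, `|u / v - α| ≤ δ`. -/
noncomputable def primitiveConePoints (α δ x : ℝ) : Finset (ℤ × ℕ) :=
  {p ∈ conePoints α δ x | Int.gcd p.1 p.2 = 1}

lemma mem_primitiveConePoints {α δ x : ℝ} {p : ℤ × ℕ} :
    p ∈ primitiveConePoints α δ x ↔
      0 < p.2 ∧ (p.2 : ℝ) ≤ x ∧ |(p.1 : ℝ) / p.2 - α| ≤ δ ∧ Int.gcd p.1 p.2 = 1 := by
  rw [primitiveConePoints, Finset.mem_filter, mem_conePoints, and_assoc, and_assoc]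

lemma primitiveConePoints_subset {α δ δ' x : ℝ} (h : δ' ≤ δ) :
    primitiveConePoints α δ' x ⊆ primitiveConePoints α δ x := fun p hp ↦ by
  rw [mem_primitiveConePoints] at hp ⊢
  exact ⟨hp.1, hp.2.1, hp.2.2.1.trans h, hp.2.2.2⟩

lemma card_primitiveConePoints {α δ x : ℝ} {N : ℕ}
    (hN : ∀ p ∈ conePoints α δ x, Int.gcd p.1 p.2 ≤ N) :
    ((primitiveConePoints α δ x).card : ℝ) =
      ∑ d ∈ Finset.Ioc 0 N, (μ d : ℝ) * ((conePoints α δ (x / d)).card : ℝ) := by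
  have hgcd : ∀ p ∈ conePoints α δ x, Int.gcd p.1 p.2 ∈ Finset.Ioc 0 N := fun p hp ↦ by
    have hv := (mem_conePoints.mp hp).1
    exact Finset.mem_Ioc.mpr ⟨Int.gcd_pos_of_ne_zero_right _ (by omega), hN p hp⟩
  have hcount := card_filter_eq_one_eq_sum_moebius _ hgcd
  have hscale : ∀ d ∈ Finset.Ioc 0 N,
      μ d * ({p ∈ conePoints α δ x | d ∣ Int.gcd p.1 p.2}.card : ℤ) =
        μ d * ((conePoints α δ (x / d)).card : ℤ) := fun d hd ↦ by
    rw [card_filter_dvd_gcd_conePoints (Finset.mem_Ioc.mp hd).1]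
  rw [Finset.sum_congr rfl hscale] at hcount
  exact_mod_cast hcount

lemma abs_card_primitiveConePoints_sub_le {α δ a b x : ℝ} {N : ℕ} (hδ : 0 ≤ δ) (hb : 0 ≤ b)
    (hcone : ∀ y, 0 ≤ y → |((conePoints α δ y).card : ℝ) - δ * y ^ 2| ≤ a + b * y) (hx : 0 ≤ x)
    (hN : N ≠ 0) (hgcd : ∀ p ∈ conePoints α δ x, Int.gcd p.1 p.2 ≤ N) :
    |((primitiveConePoints α δ x).card : ℝ) - 6 / π ^ 2 * (δ * x ^ 2)| ≤
      N * a + b * x * (1 + log N) + δ * x ^ 2 / N := by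
  rw [card_primitiveConePoints hgcd, ← tsum_moebius_div_sq]
  exact abs_sum_mul_comp_div_sub_le (w := fun d ↦ μ d)
    (fun _ ↦ by exact_mod_cast ArithmeticFunction.abs_moebius_le_one) hb hδ hcone hx hN

end Moebius

lemma one_add_log_le_mul_rpow {K B lam y : ℝ} (hK : 0 ≤ K) (hB : 1 ≤ B) (hlam : 0 < lam)
    (hy₀ : 0 ≤ y) (hy : y ≤ K * B ^ (1 + lam)) :
    1 + log y ≤ (1 + K ^ (lam / (1 + lam)) / (lam / (1 + lam))) * B ^ lam := by
  have hs : 0 < lam / (1 + lam) := by positivity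
  have hB0 : 0 ≤ B := by linarith
  have hlog : log y ≤ K ^ (lam / (1 + lam)) / (lam / (1 + lam)) * B ^ lam := calc
    log y ≤ y ^ (lam / (1 + lam)) / (lam / (1 + lam)) := log_le_rpow_div hy₀ hs
    _ ≤ (K * B ^ (1 + lam)) ^ (lam / (1 + lam)) / (lam / (1 + lam)) := by gcongr
    _ = K ^ (lam / (1 + lam)) / (lam / (1 + lam)) * B ^ lam := by
      rw [mul_rpow hK (by positivity), ← rpow_mul hB0, mul_div_cancel₀ _ (by positivity),
        mul_div_right_comm]
  linarith [one_le_rpow hB hlam.le]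

namespace IsDiophantineWith

variable {lam C α : ℝ}

lemma mul_sq_gcd_le_of_mem_conePoints (hα : IsDiophantineWith lam C α) (hlam : 0 ≤ lam) {δ x : ℝ}
    (hδ : 0 ≤ δ) {p : ℤ × ℕ} (hp : p ∈ conePoints α δ x) :
    C * (Int.gcd p.1 p.2 : ℝ) ^ 2 ≤ x ^ (2 + lam) * δ := by
  obtain ⟨hv, hvx, -⟩ := mem_conePoints.mp hp
  have hg : 0 < Int.gcd p.1 p.2 := Int.gcd_pos_of_ne_zero_right _ (by omega)
  have hg' : (1 : ℝ) ≤ Int.gcd p.1 p.2 := by exact_mod_cast hg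
  have hx : 0 < x := lt_of_lt_of_le (by exact_mod_cast hv) hvx
  have hnonempty : (conePoints α δ (x / Int.gcd p.1 p.2)).Nonempty := by
    rw [← Finset.card_pos, ← card_filter_dvd_gcd_conePoints hg]
    exact Finset.card_pos.mpr ⟨p, Finset.mem_filter.mpr ⟨hp, dvd_rfl⟩⟩
  obtain ⟨q, hq⟩ := hnonempty
  rw [← le_div_iff₀ (by positivity)]
  calc C ≤ (x / Int.gcd p.1 p.2) ^ (2 + lam) * δ := hα.le_rpow_mul_of_mem_conePoints hlam hq
    _ = (x / Int.gcd p.1 p.2) ^ 2 * (x / Int.gcd p.1 p.2) ^ lam * δ := by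
      rw [rpow_add (by positivity), rpow_two]
    _ ≤ (x / Int.gcd p.1 p.2) ^ 2 * x ^ lam * δ := by
      gcongr
      exact div_le_self hx.le hg'
    _ = x ^ (2 + lam) * δ / (Int.gcd p.1 p.2 : ℝ) ^ 2 := by
      rw [rpow_add hx, rpow_two]
      ring

lemma gcd_le_of_mem_conePoints (hα : IsDiophantineWith lam C α) (hlam : 0 ≤ lam) {ε Q B x : ℝ}
    (hε : 0 ≤ ε) (hB : 1 ≤ B) (hQ : 0 < Q) (hx : 0 ≤ x) (hxB : x ≤ B) {p : ℤ × ℕ}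
    (hp : p ∈ conePoints α (ε / Q ^ 2) x) :
    (Int.gcd p.1 p.2 : ℝ) ≤ (1 + ε / C) * (B / Q) * B ^ lam := by
  have hC := hα.pos
  have hY : 1 ≤ B ^ lam := one_le_rpow hB hlam
  refine le_of_sq_le_sq ?_ (by positivity)
  calc (Int.gcd p.1 p.2 : ℝ) ^ 2 ≤ x ^ (2 + lam) * (ε / Q ^ 2) / C := by
        rw [le_div_iff₀' hC]
        exact hα.mul_sq_gcd_le_of_mem_conePoints hlam (by positivity) hp
    _ ≤ B ^ (2 + lam) * (ε / Q ^ 2) / C := by gcongr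
    _ = ε / C * (B / Q) ^ 2 * B ^ lam := by
      rw [rpow_add (by linarith), rpow_two]
      ring
    _ ≤ (1 + ε / C) ^ 2 * (B / Q) ^ 2 * (B ^ lam) ^ 2 := by
      gcongr
      · nlinarith [show 0 ≤ ε / C by positivity]
      · exact le_self_pow₀ hY two_ne_zero
    _ = ((1 + ε / C) * (B / Q) * B ^ lam) ^ 2 := by ring

lemma exists_gcd_le_of_mem_conePoints (hα : IsDiophantineWith lam C α) (hlam : 0 ≤ lam)
    {ε Q B x : ℝ} (hε : 0 ≤ ε) (hQ : 1 ≤ Q) (hQB : Q ≤ B) (hx : 0 ≤ x) (hxB : x ≤ B) :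
    ∃ N : ℕ, B / Q ≤ N ∧ (N : ℝ) ≤ 2 * (1 + ε / C) * (B / Q) * B ^ lam ∧
      ∀ p ∈ conePoints α (ε / Q ^ 2) x, Int.gcd p.1 p.2 ≤ N := by
  have hQ0 : 0 < Q := by linarith
  have hB : 1 ≤ B := hQ.trans hQB
  have hX : 1 ≤ B / Q := (one_le_div hQ0).mpr hQB
  have hY : 1 ≤ B ^ lam := one_le_rpow hB hlam
  have hL : 1 ≤ 1 + ε / C := le_add_of_nonneg_right (div_nonneg hε hα.pos.le)
  have hXle : B / Q ≤ (1 + ε / C) * (B / Q) * B ^ lam := calc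
    B / Q = 1 * (B / Q) * 1 := by ring
    _ ≤ (1 + ε / C) * (B / Q) * B ^ lam := by gcongr
  refine ⟨⌈(1 + ε / C) * (B / Q) * B ^ lam⌉₊, hXle.trans (Nat.le_ceil _), ?_, fun p hp ↦ ?_⟩
  · have := Nat.ceil_lt_add_one (zero_le_one.trans (hX.trans hXle))
    linarith
  · exact_mod_cast
      (hα.gcd_le_of_mem_conePoints hlam hε hB hQ0 hx hxB hp).trans (Nat.le_ceil _)

lemma exists_abs_card_primitiveConePoints_sub_le (hα : IsDiophantineWith lam C α)
    (hlam : 0 < lam) {ε : ℝ} (hε : 0 ≤ ε) :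
    ∃ K : ℝ, ∀ B Q x : ℝ, 1 ≤ Q → Q ≤ B → 0 ≤ x → x ≤ B →
      |((primitiveConePoints α (ε / Q ^ 2) x).card : ℝ) - 6 / π ^ 2 * (ε / Q ^ 2 * x ^ 2)| ≤
        K * (B / Q) * (B ^ lam) ^ 2 := by
  obtain ⟨D, hD, hcone⟩ := hα.exists_abs_card_conePoints_sub_le hlam hε
  have hL : 0 ≤ 2 * (1 + ε / C) := by have := hα.pos; positivity
  set L := 2 * (1 + ε / C)
  set c := 1 + L ^ (lam / (1 + lam)) / (lam / (1 + lam))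
  refine ⟨L * D + D * c + ε, fun B Q x hQ hQB hx hxB ↦ ?_⟩
  have : 0 < Q := by linarith
  have hB : 1 ≤ B := hQ.trans hQB
  have hB0 : 0 < B := by linarith
  have hY : 1 ≤ B ^ lam := one_le_rpow hB hlam.le
  obtain ⟨N, hXN, hNle, hgcd⟩ := hα.exists_gcd_le_of_mem_conePoints hlam.le hε hQ hQB hx hxB
  have hX : 0 < B / Q := by positivity
  have hN : N ≠ 0 := by exact_mod_cast (hX.trans_le hXN).ne'
  have hlog : 1 + log N ≤ c * B ^ lam := by
    refine one_add_log_le_mul_rpow hL hB hlam N.cast_nonneg (hNle.trans ?_)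
    rw [rpow_add hB0, rpow_one, mul_assoc L]
    gcongr
    exact div_le_self hB0.le hQ
  have hcone' : ∀ y, 0 ≤ y → |((conePoints α (ε / Q ^ 2) y).card : ℝ) - ε / Q ^ 2 * y ^ 2| ≤
      D * B ^ lam + D * B ^ lam / Q * y := fun y hy ↦ calc
    _ ≤ D * (y / Q + 1) * Q ^ lam := hcone Q y hQ hy
    _ ≤ D * (y / Q + 1) * B ^ lam := by gcongr
    _ = D * B ^ lam + D * B ^ lam / Q * y := by ring
  calc _ ≤ N * (D * B ^ lam) + D * B ^ lam / Q * x * (1 + log N) + ε / Q ^ 2 * x ^ 2 / N :=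
        abs_card_primitiveConePoints_sub_le (by positivity) (by positivity) hcone' hx hN hgcd
    _ ≤ L * (B / Q) * B ^ lam * (D * B ^ lam) + D * B ^ lam / Q * B * (c * B ^ lam) +
        ε / Q ^ 2 * B ^ 2 / (B / Q) := by gcongr
    _ = (L * D + D * c) * (B / Q) * (B ^ lam) ^ 2 + ε * (B / Q) * 1 := by field_simp
    _ ≤ (L * D + D * c) * (B / Q) * (B ^ lam) ^ 2 + ε * (B / Q) * (B ^ lam) ^ 2 := by
      gcongr
      exact one_le_pow₀ hY
    _ = (L * D + D * c + ε) * (B / Q) * (B ^ lam) ^ 2 := by ring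

end IsDiophantineWith

lemma card_Icc_natCeil_natFloor_le {a b : ℝ} (hb : 0 ≤ b) (hab : a ≤ b) :
    ((Finset.Icc ⌈a⌉₊ ⌊b⌋₊).card : ℝ) ≤ b - a + 1 := by
  rw [Nat.card_Icc]
  rcases le_total ⌈a⌉₊ (⌊b⌋₊ + 1) with h | h
  · rw [Nat.cast_sub h]
    push_cast
    linarith [Nat.floor_le hb, Nat.le_ceil a]
  · rw [Nat.sub_eq_zero_of_le h, Nat.cast_zero]
    linarith

lemma exists_card_le_forall_mem_of_abs_sub_le (α : ℝ) {ε b : ℝ} (hε : 0 ≤ ε) (hb : 0 ≤ b) :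
    ∃ W : Finset (ℤ × ℕ), (W.card : ℝ) ≤ (2 * ε + 1) ^ 2 ∧
      ∀ p : ℤ × ℕ, |(p.1 : ℝ) - p.2 * α| ≤ ε → |(p.2 : ℝ) - b| ≤ ε → p ∈ W := by
  refine ⟨latticeStrip (Finset.Icc ⌈b - ε⌉₊ ⌊b + ε⌋₊) (fun v ↦ v * α - ε) (fun v ↦ v * α + ε),
    ?_, fun p hu hv ↦ ?_⟩
  · rw [card_latticeStrip, Nat.cast_sum, sq]
    have hslice : ∀ v ∈ Finset.Icc ⌈b - ε⌉₊ ⌊b + ε⌋₊,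
        ((Finset.Icc ⌈v * α - ε⌉ ⌊v * α + ε⌋).card : ℝ) ≤ 2 * ε + 1 := fun v _ ↦
      (card_Icc_ceil_floor_le (by linarith)).trans_eq (by ring)
    refine (Finset.sum_le_card_nsmul _ _ _ hslice).trans ?_
    rw [nsmul_eq_mul]
    gcongr
    exact (card_Icc_natCeil_natFloor_le (by linarith) (by linarith)).trans_eq (by ring)
  · rw [abs_sub_le_iff] at hu hv
    rw [mem_latticeStrip, Finset.mem_Icc, Nat.ceil_le, Nat.le_floor_iff (by linarith)]
    exact ⟨⟨by linarith, by linarith⟩, by linarith, by linarith⟩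

lemma abs_ncard_sub_card_le {ι : Type*} {s : Set ι} {t w : Finset ι}
    (hst : ∀ i ∈ s, i ∈ t ∨ i ∈ w) (hts : ∀ i ∈ t, i ∈ s ∨ i ∈ w) :
    |(s.ncard : ℝ) - t.card| ≤ w.card := by
  classical
  have hs : s ⊆ ↑(t ∪ w) := fun i hi ↦ by simpa using hst i hi
  have hfin : s.Finite := (t ∪ w).finite_toSet.subset hs
  have hle : s.ncard ≤ t.card + w.card := calc
    s.ncard ≤ (t ∪ w).card := by
      rw [← Set.ncard_coe_finset]
      exact Set.ncard_le_ncard hs (Finset.finite_toSet _)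
    _ ≤ t.card + w.card := Finset.card_union_le _ _
  have hge : t.card ≤ s.ncard + w.card := calc
    t.card ≤ (s ∪ w).ncard := by
      rw [← Set.ncard_coe_finset]
      exact Set.ncard_le_ncard hts (hfin.union w.finite_toSet)
    _ ≤ s.ncard + w.card := by
      rw [← Set.ncard_coe_finset w]
      exact Set.ncard_union_le _ _
  rify at hle hge
  rw [abs_sub_le_iff]
  constructor <;> linarith

lemma abs_max_abs_sub_mul_le {u v α : ℝ} (hv : 0 ≤ v) :
    |max |u| v - max 1 |α| * v| ≤ |u - v * α| := by
  have hmul : max 1 |α| * v = max |v * α| v := by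
    rw [max_mul_of_nonneg _ _ hv, one_mul, max_comm, abs_mul, abs_of_nonneg hv, mul_comm v]
  rw [hmul]
  exact (abs_max_sub_max_le_abs _ _ _).trans (abs_abs_sub_abs_le _ _)

lemma abs_sub_div_le_of_not_iff {M m v B ε : ℝ} (hm : 1 ≤ m) (hM : |M - m * v| ≤ ε)
    (hiff : ¬(M ≤ B ↔ v ≤ B / m)) : |v - B / m| ≤ ε := by
  have hm0 : 0 < m := by linarith
  have hB : m * (B / m) = B := mul_div_cancel₀ B hm0.ne'
  have hscaled : |m * (v - B / m)| ≤ ε := by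
    rw [mul_sub, hB]
    rw [le_div_iff₀' hm0] at hiff
    rw [abs_le] at hM ⊢
    rcases le_or_gt M B with hMB | hMB <;> rcases le_or_gt (m * v) B with hvB | hvB
    · exact absurd (iff_of_true hMB hvB) hiff
    · constructor <;> linarith
    · constructor <;> linarith
    · exact absurd (iff_of_false hMB.not_ge hvB.not_ge) hiff
  rw [abs_mul, abs_of_pos hm0] at hscaled
  exact (le_mul_of_one_le_left (abs_nonneg _) hm).trans hscaled

lemma exists_card_le_forall_max_le_iff (α : ℝ) {δ ε B : ℝ} (hε : 0 ≤ ε) (hB : 0 ≤ B)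
    (hδ : B * δ ≤ ε) :
    ∃ W : Finset (ℤ × ℕ), (W.card : ℝ) ≤ (2 * ε + 1) ^ 2 ∧
      ∀ p : ℤ × ℕ, 0 < p.2 → (p.2 : ℝ) ≤ B → |(p.1 : ℝ) / p.2 - α| ≤ δ → p ∉ W →
        (max |(p.1 : ℝ)| p.2 ≤ B ↔ (p.2 : ℝ) ≤ B / max 1 |α|) := by
  obtain ⟨W, hWcard, hW⟩ := exists_card_le_forall_mem_of_abs_sub_le α hε
    (show 0 ≤ B / max 1 |α| by positivity)
  refine ⟨W, hWcard, fun p hv hvB hp hpW ↦ ?_⟩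
  have hv' : (0 : ℝ) < p.2 := by exact_mod_cast hv
  have hclose : |(p.1 : ℝ) - p.2 * α| ≤ ε := calc
    |(p.1 : ℝ) - p.2 * α| = p.2 * |(p.1 : ℝ) / p.2 - α| := by
      rw [← abs_of_pos hv', ← abs_mul, abs_of_pos hv', mul_sub, mul_div_cancel₀ _ hv'.ne']
    _ ≤ B * δ := by gcongr
    _ ≤ ε := hδ
  by_contra hiff
  exact hpW <| hW p hclose <| abs_sub_div_le_of_not_iff (le_max_left _ _)
    ((abs_max_abs_sub_mul_le hv'.le).trans hclose) hiff

lemma abs_zoomCount_sub_le (α : ℝ) {r ε₁ ε₂ B : ℝ} (hr₀ : 0 < r) (hr₁ : r ≤ 1) (hε₁ : 0 ≤ ε₁)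
    (hε : ε₂ ≤ ε₁) (hB : 1 ≤ B) :
    |(zoomCount α r ε₁ ε₂ B : ℝ) -
        ((primitiveConePoints α (ε₁ * B ^ (-(1 / r))) (B / max 1 |α|)).card -
          (primitiveConePoints α (ε₂ * B ^ (-(1 / r))) (B / max 1 |α|)).card)| ≤
      (2 * ε₁ + 1) ^ 2 := by
  set ρ := B ^ (-(1 / r))
  set m := max 1 |α|
  have hB0 : 0 < B := by linarith
  have hBρ : B * ρ ≤ 1 := calc
    B * ρ = B ^ (1 - 1 / r) := by rw [sub_eq_add_neg, rpow_add hB0, rpow_one]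
    _ ≤ 1 := rpow_le_one_of_one_le_of_nonpos hB (sub_nonpos.mpr ((one_le_div hr₀).mpr hr₁))
  obtain ⟨W, hWcard, hW⟩ := exists_card_le_forall_max_le_iff α (δ := ε₁ * ρ) hε₁ hB0.le
    (by rw [mul_left_comm]; exact mul_le_of_le_one_right hε₁ hBρ)
  have hsub : primitiveConePoints α (ε₂ * ρ) (B / m) ⊆ primitiveConePoints α (ε₁ * ρ) (B / m) :=
    primitiveConePoints_subset (by gcongr)
  rw [← Nat.cast_sub (Finset.card_le_card hsub), ← Finset.card_sdiff_of_subset hsub]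
  refine (abs_ncard_sub_card_le (fun p hp ↦ ?_) (fun p hp ↦ ?_)).trans hWcard
  · obtain ⟨hv, hgcd, hmax, hlow, hup⟩ := hp
    push_cast at hmax
    rw [or_iff_not_imp_right, Finset.mem_sdiff, mem_primitiveConePoints, mem_primitiveConePoints]
    intro hpW
    have hx := (hW p hv ((le_max_right _ _).trans hmax) hup hpW).mp hmax
    exact ⟨⟨hv, hx, hup, hgcd⟩, fun h ↦ hlow.not_ge h.2.2.1⟩
  · rw [Finset.mem_sdiff, mem_primitiveConePoints, mem_primitiveConePoints] at hp
    obtain ⟨⟨hv, hx, hup, hgcd⟩, hnotMem⟩ := hp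
    rw [or_iff_not_imp_right]
    intro hpW
    have hvB : (p.2 : ℝ) ≤ B := hx.trans (div_le_self hB0.le (le_max_left _ _))
    have hmax := (hW p hv hvB hup hpW).mpr hx
    exact ⟨hv, hgcd, by exact_mod_cast hmax,
      lt_of_not_ge fun h ↦ hnotMem ⟨hv, hx, h, hgcd⟩, hup⟩

lemma max_one_abs_sq (a : ℝ) : max 1 |a| ^ 2 = max 1 (a ^ 2) := by
  rcases le_total 1 |a| with h | h
  · rw [max_eq_right h, sq_abs, max_eq_right ((one_le_sq_iff_one_le_abs a).mpr h)]
  · rw [max_eq_left h, one_pow, max_eq_left ((sq_le_one_iff_abs_le_one a).mpr h)]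

lemma IsDiophantineWith.exists_abs_card_primitiveConePoints_rpow_sub_le {lam C α ε r : ℝ}
    (hα : IsDiophantineWith lam C α) (hlam : 0 < lam) (hε : 0 ≤ ε) (hr : 1 / 2 ≤ r) :
    ∃ K : ℝ, ∀ B : ℝ, 1 ≤ B →
      |((primitiveConePoints α (ε * B ^ (-(1 / r))) (B / max 1 |α|)).card : ℝ) -
          6 * ε / (π ^ 2 * max 1 (α ^ 2)) * B ^ (2 - 1 / r)| ≤
        K * B ^ (1 - 1 / (2 * r) + 2 * lam) := by
  have : 0 < r := by linarith
  obtain ⟨K, hK⟩ := hα.exists_abs_card_primitiveConePoints_sub_le hlam hε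
  refine ⟨K, fun B hB ↦ ?_⟩
  have hB0 : 0 < B := by linarith
  set Q := B ^ (1 / (2 * r)) with hQ
  have hQ1 : 1 ≤ Q := one_le_rpow hB (by positivity)
  have hQB : Q ≤ B :=
    rpow_le_self_of_one_le hB ((div_le_one (by positivity)).mpr (by linarith))
  have hρ : B ^ (-(1 / r)) = (Q ^ 2)⁻¹ := by
    rw [rpow_neg hB0.le, ← rpow_mul_natCast hB0.le]
    congr 2
    push_cast
    field_simp
  have hmain : 6 * ε / (π ^ 2 * max 1 (α ^ 2)) * B ^ (2 - 1 / r) =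
      6 / π ^ 2 * (ε / Q ^ 2 * (B / max 1 |α|) ^ 2) := by
    rw [← max_one_abs_sq, sub_eq_add_neg, rpow_add hB0, rpow_two, hρ]
    ring
  have herror : K * B ^ (1 - 1 / (2 * r) + 2 * lam) = K * (B / Q) * (B ^ lam) ^ 2 := by
    rw [rpow_add hB0, rpow_sub hB0, rpow_one, ← hQ, mul_comm 2, ← rpow_two, ← rpow_mul hB0.le,
      mul_assoc]
  rw [hmain, herror, hρ, ← div_eq_mul_inv]
  exact hK B Q _ hQ1 hQB (by positivity) (div_le_self hB0.le (le_max_left _ _))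

theorem stmt_4_general {α lam C r ε₁ ε₂ : ℝ} (hlam : 0 < lam) (hα : IsDiophantineWith lam C α)
    (hr₁ : 1 / 2 ≤ r) (hr₂ : r ≤ 1) (hε₂ : 0 ≤ ε₂) (hε : ε₂ ≤ ε₁) :
    ∃ K : ℝ, ∀ B : ℝ, 1 ≤ B →
      |(zoomCount α r ε₁ ε₂ B : ℝ) -
          6 * (ε₁ - ε₂) / (π ^ 2 * max 1 (α ^ 2)) * B ^ (2 - 1 / r)| ≤
        K * B ^ (1 - 1 / (2 * r) + 2 * lam) := by
  have hr₀ : 0 < r := by linarith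
  obtain ⟨K₁, hK₁⟩ :=
    hα.exists_abs_card_primitiveConePoints_rpow_sub_le hlam (hε₂.trans hε) hr₁
  obtain ⟨K₂, hK₂⟩ := hα.exists_abs_card_primitiveConePoints_rpow_sub_le hlam hε₂ hr₁
  refine ⟨(2 * ε₁ + 1) ^ 2 + K₁ + K₂, fun B hB ↦ ?_⟩
  have hexp : 1 / (2 * r) ≤ 1 := (div_le_one (by positivity)).mpr (by linarith)
  have hconst : (2 * ε₁ + 1) ^ 2 ≤ (2 * ε₁ + 1) ^ 2 * B ^ (1 - 1 / (2 * r) + 2 * lam) :=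
    le_mul_of_one_le_right (sq_nonneg _) (one_le_rpow hB (by linarith))
  have hzoom := abs_zoomCount_sub_le α hr₀ hr₂ (hε₂.trans hε) hε hB
  have hcone₁ := hK₁ B hB
  have hcone₂ := hK₂ B hB
  rw [mul_sub, sub_div, sub_mul]
  rw [abs_le] at *
  constructor <;> linarith

/-- Sub-critical zoom at a real number `α` of irrationality measure `2`, for `1/2 < r ≤ 1`:
`M_r(ε₁,ε₂,B) = (6(ε₁−ε₂)/(π²·max(1,α²)))·B^(2−1/r) + O(B^(1−1/(2r)+τ))`. -/
theorem stmt_4 (α : ℝ) (hirr : Irrational α)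
    (hmeas : ∀ lam : ℝ, 0 < lam → ∃ C : ℝ, 0 < C ∧
      ∀ (u : ℤ) (v : ℕ), 0 < v → |α - (u : ℝ) / v| ≥ C * (v : ℝ) ^ (-(2 + lam)))
    (r : ℝ) (hr₁ : 1 / 2 < r) (hr₂ : r ≤ 1)
    (ε₁ ε₂ : ℝ) (hε : ε₁ > ε₂) (hε₂ : ε₂ ≥ 0) (τ : ℝ) (hτ : 0 < τ) :
    ∃ C : ℝ, ∀ B : ℝ, B ≥ 2 →
      |(zoomCount α r ε₁ ε₂ B : ℝ) -
          6 * (ε₁ - ε₂) / (π ^ 2 * max 1 (α ^ 2)) * B ^ (2 - 1 / r)| ≤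
        C * B ^ (1 - 1 / (2 * r) + τ) := by
  obtain ⟨c, hc, hle⟩ := hmeas (τ / 2) (half_pos hτ)
  obtain ⟨K, hK⟩ := stmt_4_general (half_pos hτ) ⟨hc, hle⟩ hr₁.le hr₂ hε₂ hε.le
  exact ⟨K, fun B hB ↦ by simpa only [mul_div_cancel₀ τ two_ne_zero] using hK B (by linarith)⟩
end

section
/- Fix ε > 0 and r with 1/2 < r < 7/10. There is a constant C, depending only on a, b, ε and r, such that the following holds. Let Λ ⊆ ℤ² be a subgroup of finite index d(Λ) = [ℤ² : Λ] containing at least one pair with coprime coordinates, let K > 0, and let B ≥ 2 satisfy K²·b ≤ (2²¹·162·(b/a)·ε²)^(−2/5)·B^((4/5)(1/r − 1) − (3/5)(2 − 1/r)) and b·d(Λ)² ≤ K²·B^(2−1/r). Set Θ(Λ) = (6/π²)·d(Λ)⁻¹·∏_{p prime, p ∣ d(Λ)} (1 + 1/p)⁻¹ and S = #{(u,v) ∈ Λ : u, v positive integers, gcd(u,v) = 1, 0 < u/v − √(b/a) ≤ ε·B^(−1/r), v ≤ K·B}. Then |S − (Θ(Λ)·ε·K²/2)·B^(2−1/r)|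 ≤ C·(K^(3/2)·b^(1/4)·d(Λ)^(1/2)·B^((3/4)(2−1/r))·log B + K·b^(3/2)·B^(1−1/(2r))·log B). -/
open Real

/-!
Put `α = √(b / a)`, `δ = ε B ^ (-1 / r)` and `V = K B`. The zoom `(u, v) ↦ (δ v, u - α v)` carries
the sector `0 < u - α v ≤ δ v`, `v ≤ V` onto a right isosceles triangle with legs `δ V`. Since `α`
is a quadratic irrational it is badly approximable, so a Dirichlet approximation `u / v` with
`v ≍ 1 / √δ` extends to a basis of `ℤ²` whose zoom has size `O(√δ)`. In such a basis every coset of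
`d ℤ²` meets the sector in `δ V² / (2 d²) + O(√δ V / d + 1)` points. A subgroup of index `d`
contains `d ℤ²` and is a union of `d` cosets of it.

Primitive points are sieved out by Möbius inversion. Bad approximability bounds the gcd of a point
of the sector by `O(√δ V)`, which truncates the Möbius sum, and since `ℤ² / Λ` is cyclic, the
vectors `z` with `k z ∈ Λ` form a subgroup of index `d / gcd(d, k)`. The resulting series
`∑ μ(k) gcd(k, d) / k²` is an Euler product, which yields the factor `Θ(Λ)`.
-/

open MeasureTheory

section Triangle

lemma volume_floor_preimage (S : Set (ℤ × ℤ)) :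
    volume {x : ℝ × ℝ | (⌊x.1⌋, ⌊x.2⌋) ∈ S} = S.encard := by
  have hfloor : Measurable fun x : ℝ × ℝ ↦ (⌊x.1⌋, ⌊x.2⌋) := by fun_prop
  have hmap : volume.map (fun x : ℝ × ℝ ↦ (⌊x.1⌋, ⌊x.2⌋)) = Measure.count := by
    refine Measure.ext_of_singleton fun z ↦ ?_
    have hcell : (fun x : ℝ × ℝ ↦ (⌊x.1⌋, ⌊x.2⌋)) ⁻¹' {z} =
        Set.Ico (z.1 : ℝ) (z.1 + 1) ×ˢ Set.Ico (z.2 : ℝ) (z.2 + 1) := by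
      ext x
      simp [Prod.ext_iff, Int.floor_eq_iff]
    rw [Measure.map_apply hfloor (.singleton z), hcell, Measure.volume_eq_prod,
      Measure.prod_prod]
    simp
  rw [← Measure.count_apply S.to_countable.measurableSet, ← hmap,
    Measure.map_apply hfloor S.to_countable.measurableSet]
  rfl

/-- The right isosceles triangle `0 < t ≤ s ≤ w` in the `(s, t)`-plane, of area `w ^ 2 / 2`. -/
def triangle (w : ℝ) : Set (ℝ × ℝ) := {y | 0 < y.2 ∧ y.2 ≤ y.1 ∧ y.1 ≤ w}

lemma volume_triangle {w : ℝ} (hw : 0 ≤ w) :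
    volume (triangle w) = ENNReal.ofReal (w ^ 2 / 2) := by
  have hmeas : MeasurableSet (triangle w) := by
    apply MeasurableSet.inter (measurableSet_lt measurable_const measurable_snd)
    exact (measurableSet_le measurable_snd measurable_fst).inter
      (measurableSet_le measurable_fst measurable_const)
  have hslice (s : ℝ) : volume (Prod.mk s ⁻¹' triangle w) =
      (Set.Ioc 0 w).indicator (fun s ↦ ENNReal.ofReal s) s := by
    by_cases hs : s ∈ Set.Ioc 0 w
    · have : Prod.mk s ⁻¹' triangle w = Set.Ioc 0 s := by
        ext t
        simp [triangle, hs.2]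
      rw [this, Set.indicator_of_mem hs, Real.volume_Ioc, sub_zero]
    · have : Prod.mk s ⁻¹' triangle w = ∅ := by
        ext t
        simp only [Set.mem_preimage, triangle, Set.mem_ofPred_eq, Set.mem_empty_iff_false,
          iff_false]
        exact fun ⟨h0, hts, hsw⟩ ↦ hs ⟨h0.trans_le hts, hsw⟩
      rw [this, Set.indicator_of_notMem hs, measure_empty]
  rw [Measure.volume_eq_prod, Measure.prod_apply hmeas, lintegral_congr hslice,
    lintegral_indicator measurableSet_Ioc,
    ← ofReal_integral_eq_lintegral_ofReal (f := fun s ↦ s) continuous_id.integrableOn_Ioc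
      (ae_restrict_of_forall_mem measurableSet_Ioc fun s (hs : s ∈ Set.Ioc 0 w) ↦ hs.1.le),
    ← intervalIntegral.integral_of_le hw, integral_id]
  simp

lemma add_mem_triangle {w κ : ℝ} {y y' : ℝ × ℝ} (hy : y ∈ triangle w) (h : ‖y' - y‖ ≤ κ) :
    y' + (3 * κ, κ) ∈ triangle (w + 4 * κ) := by
  obtain ⟨hfst, hsnd⟩ := max_le_iff.1 h
  rw [Prod.fst_sub, Real.norm_eq_abs, abs_le] at hfst
  rw [Prod.snd_sub, Real.norm_eq_abs, abs_le] at hsnd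
  obtain ⟨hpos, hle, hlew⟩ := hy
  refine ⟨?_, ?_, ?_⟩ <;> simp only [Prod.fst_add, Prod.snd_add] <;> linarith

end Triangle

section LinearImage

variable (f : ℝ × ℝ →ₗ[ℝ] ℝ × ℝ)

lemma norm_map_sub_map_floor_le (x : ℝ × ℝ) :
    ‖f x - f (⌊x.1⌋, ⌊x.2⌋)‖ ≤ ‖f (1, 0)‖ + ‖f (0, 1)‖ := by
  have hfract : x - (((⌊x.1⌋ : ℤ) : ℝ), ((⌊x.2⌋ : ℤ) : ℝ)) =
      Int.fract x.1 • (1, 0) + Int.fract x.2 • (0, 1) := by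
    ext <;> simp
  have norm_fract_le (t : ℝ) : ‖Int.fract t‖ ≤ 1 := by
    rw [Real.norm_of_nonneg (Int.fract_nonneg t)]
    exact (Int.fract_lt_one t).le
  rw [← map_sub, hfract, map_add, map_smul, map_smul]
  refine (norm_add_le _ _).trans ?_
  rw [norm_smul, norm_smul]
  gcongr <;> exact mul_le_of_le_one_left (norm_nonneg _) (norm_fract_le _)

variable {f}

lemma volume_preimage_triangle (hf : LinearMap.det f ≠ 0) (v : ℝ × ℝ) {w : ℝ} (hw : 0 ≤ w) :
    volume {x | f x + v ∈ triangle w} = ENNReal.ofReal (w ^ 2 / (2 * |LinearMap.det f|)) := by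
  change volume (f ⁻¹' ((· + v) ⁻¹' triangle w)) = _
  rw [Measure.addHaar_preimage_linearMap _ hf, measure_preimage_add_right, volume_triangle hw,
    ← ENNReal.ofReal_mul (abs_nonneg _), abs_inv]
  congr 1
  field_simp

variable {κ w : ℝ}

lemma encard_triangle_le (hf : LinearMap.det f ≠ 0) (v : ℝ × ℝ)
    (hκ : ‖f (1, 0)‖ + ‖f (0, 1)‖ ≤ κ) (hw : 0 ≤ w) :
    ({z : ℤ × ℤ | f (z.1, z.2) + v ∈ triangle w}.encard : ENNReal) ≤
      ENNReal.ofReal ((w + 4 * κ) ^ 2 / (2 * |LinearMap.det f|)) := by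
  have hκ0 : 0 ≤ κ := le_trans (by positivity) hκ
  rw [← volume_floor_preimage, ← volume_preimage_triangle hf (v + (3 * κ, κ)) (by positivity)]
  refine measure_mono fun x hx ↦ ?_
  have := add_mem_triangle (y' := f x + v) hx (by
    simpa using (norm_map_sub_map_floor_le f x).trans hκ)
  rwa [add_assoc] at this

lemma le_encard_triangle (hf : LinearMap.det f ≠ 0) (v : ℝ × ℝ)
    (hκ : ‖f (1, 0)‖ + ‖f (0, 1)‖ ≤ κ) (hw : 4 * κ ≤ w) :
    ENNReal.ofReal ((w - 4 * κ) ^ 2 / (2 * |LinearMap.det f|)) ≤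
      {z : ℤ × ℤ | f (z.1, z.2) + v ∈ triangle w}.encard := by
  rw [← volume_floor_preimage,
    ← volume_preimage_triangle hf (v - (3 * κ, κ)) (sub_nonneg.2 hw)]
  refine measure_mono fun x hx ↦ ?_
  have := add_mem_triangle (κ := κ) (y' := f (⌊x.1⌋, ⌊x.2⌋) + (v - (3 * κ, κ)))
    (show f x + (v - (3 * κ, κ)) ∈ triangle (w - 4 * κ) from hx) (by
    rw [add_sub_add_right_eq_sub, norm_sub_rev]
    exact (norm_map_sub_map_floor_le f x).trans hκ)
  rwa [add_assoc, sub_add_cancel, sub_add_cancel] at this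

lemma finite_triangle (hf : LinearMap.det f ≠ 0) (v : ℝ × ℝ) (hw : 0 ≤ w) :
    {z : ℤ × ℤ | f (z.1, z.2) + v ∈ triangle w}.Finite := by
  rw [← Set.encard_lt_top_iff]
  exact_mod_cast (encard_triangle_le hf v le_rfl hw).trans_lt ENNReal.ofReal_lt_top

theorem abs_ncard_triangle_sub_le (hf : LinearMap.det f ≠ 0) (v : ℝ × ℝ)
    (hκ : ‖f (1, 0)‖ + ‖f (0, 1)‖ ≤ κ) (hw : 0 ≤ w) :
    |({z : ℤ × ℤ | f (z.1, z.2) + v ∈ triangle w}.ncard : ℝ) - w ^ 2 / (2 * |LinearMap.det f|)| ≤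
      (4 * w * κ + 8 * κ ^ 2) / |LinearMap.det f| := by
  set S := {z : ℤ × ℤ | f (z.1, z.2) + v ∈ triangle w}
  have hκ0 : 0 ≤ κ := le_trans (by positivity) hκ
  have : 0 < |LinearMap.det f| := abs_pos.2 hf
  have hcard : (S.encard : ENNReal) = ENNReal.ofReal (S.ncard : ℝ) := by
    rw [ENNReal.ofReal_natCast, ← (finite_triangle hf v hw).cast_ncard_eq]
    rfl
  have hupper : (S.ncard : ℝ) ≤ (w + 4 * κ) ^ 2 / (2 * |LinearMap.det f|) := by
    rw [← ENNReal.ofReal_le_ofReal_iff (by positivity), ← hcard]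
    exact encard_triangle_le hf v hκ hw
  have hlower : (w ^ 2 - 8 * w * κ - 16 * κ ^ 2) / (2 * |LinearMap.det f|) ≤ S.ncard := by
    rcases le_total (4 * κ) w with hκw | hκw
    · have hle := le_encard_triangle hf v hκ hκw
      rw [hcard, ENNReal.ofReal_le_ofReal_iff (by positivity)] at hle
      refine le_trans ?_ hle
      gcongr
      nlinarith
    · refine (div_nonpos_of_nonpos_of_nonneg ?_ (by positivity)).trans S.ncard.cast_nonneg
      nlinarith
  rw [abs_sub_le_iff]
  constructor
  · calc _ ≤ (w + 4 * κ) ^ 2 / (2 * |LinearMap.det f|) - w ^ 2 / (2 * |LinearMap.det f|) := by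
          gcongr
      _ = _ := by field_simp; ring
  · calc _ ≤ w ^ 2 / (2 * |LinearMap.det f|) -
          (w ^ 2 - 8 * w * κ - 16 * κ ^ 2) / (2 * |LinearMap.det f|) := by gcongr
      _ = _ := by field_simp; ring

end LinearImage

section BadApproximability

/-- A real number is badly approximable if `|α - u / v| ≥ c / v ^ 2` for some `c > 0` and all
fractions `u / v`. The inequality is stated with denominators cleared. -/
def BadlyApproximable (α : ℝ) : Prop :=
  ∃ c > 0, ∀ u v : ℤ, 0 < v → c ≤ v * |u - α * v|

theorem badlyApproximable_of_irrational_root {α : ℝ} (hα : Irrational α) {f : Polynomial ℤ}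
    (hdeg : f.natDegree = 2) (hroot : (f.map (algebraMap ℤ ℝ)).eval α = 0) :
    BadlyApproximable α := by
  have hf : f ≠ 0 := by
    rintro rfl
    simp at hdeg
  obtain ⟨A, hA, hliouville⟩ := Liouville.exists_pos_real_of_irrational_root hα hf hroot
  refine ⟨A⁻¹, inv_pos.2 hA, fun u v hv ↦ ?_⟩
  obtain ⟨n, rfl⟩ : ∃ n : ℕ, v = n + 1 := ⟨(v - 1).toNat, by lia⟩
  have h := hliouville u n
  have hn : (0 : ℝ) < n + 1 := by positivity
  have hdist : |α - u / (n + 1)| = |u - α * (n + 1)| / (n + 1) := by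
    rw [← abs_of_pos hn, ← abs_div, abs_of_pos hn, abs_sub_comm]
    congr 1
    field_simp
  rw [hdeg, hdist] at h
  rw [inv_le_iff_one_le_mul₀ hA]
  push_cast
  calc (1 : ℝ) ≤ _ := h
    _ = (n + 1) * |u - α * (n + 1)| * A := by field_simp

theorem badlyApproximable_sqrt_div {a b : ℕ} (hab : ¬ IsSquare (a * b)) :
    BadlyApproximable √((b : ℝ) / a) := by
  have ha : a ≠ 0 := by
    rintro rfl
    simp at hab
  have hsqrt : √((b : ℝ) / a) = √((a * b : ℕ) : ℝ) / a := by
    rw [← Real.sqrt_sq (Nat.cast_nonneg a), ← Real.sqrt_div (Nat.cast_nonneg _),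
      Real.sqrt_sq (Nat.cast_nonneg a)]
    congr 1
    push_cast
    field_simp
  have hirr : Irrational √((b : ℝ) / a) := by
    rw [hsqrt]
    exact (irrational_sqrt_natCast_iff.2 hab).div_natCast ha
  refine badlyApproximable_of_irrational_root hirr
    (f := .C (a : ℤ) * .X ^ 2 + .C 0 * .X + .C (-b : ℤ))
    (Polynomial.natDegree_quadratic (by exact_mod_cast ha)) ?_
  simp [field]

variable {α : ℝ}

lemma mul_gcd_sq_le {c : ℝ} (hc : ∀ u v : ℤ, 0 < v → c ≤ v * |u - α * v|)
    (u v : ℤ) (hv : 0 < v) : c * (u.gcd v : ℝ) ^ 2 ≤ v * |u - α * v| := by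
  have hg : 0 < u.gcd v := Int.gcd_pos_of_ne_zero_right _ hv.ne'
  obtain ⟨u', hu⟩ := Int.gcd_dvd_left (a := u) (b := v)
  obtain ⟨v', hv'⟩ := Int.gcd_dvd_right (a := u) (b := v)
  generalize u.gcd v = g at *
  subst hu hv'
  have hv'0 : 0 < v' := pos_of_mul_pos_right hv (by positivity)
  push_cast
  rw [show (g * u' : ℝ) - α * (g * v') = g * (u' - α * v') by ring, abs_mul, Nat.abs_cast]
  calc c * (g : ℝ) ^ 2 ≤ (v' * |u' - α * v'|) * g ^ 2 := by gcongr; exact hc u' v' hv'0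
    _ = _ := by ring

end BadApproximability

section Basis

/-- The linear coordinates `(u, v) ↦ (δ v, u - α v)` in which the sector
`0 < u - α v ≤ δ v`, `v ≤ V` becomes a right isosceles triangle with legs of length `δ V`. -/
def zoom (α δ : ℝ) : ℤ × ℤ →+ ℝ × ℝ :=
  AddMonoidHom.mk' (fun z ↦ (δ * z.2, z.1 - α * z.2)) fun y z ↦ by
    ext <;> simp only [Prod.fst_add, Prod.snd_add, Prod.mk_add_mk, Int.cast_add] <;> ring

lemma exists_isCoprime_abs_sub_mul_le (α : ℝ) {s : ℝ} (hs : 0 < s) :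
    ∃ u v : ℤ, IsCoprime u v ∧ 0 < v ∧ v * s ≤ 1 + s ∧ |u - α * v| ≤ s := by
  obtain ⟨q, hdist, hden⟩ :=
    Real.exists_rat_abs_sub_le_and_den_le α (n := ⌊s⁻¹⌋₊ + 1) (by positivity)
  have hden0 : (0 : ℝ) < q.den := by exact_mod_cast q.den_pos
  refine ⟨q.num, q.den, q.isCoprime_num_den, by exact_mod_cast q.den_pos, ?_, ?_⟩
  · calc (q.den : ℝ) * s ≤ (s⁻¹ + 1) * s := by
          gcongr
          have hfloor := Nat.floor_le (inv_nonneg.2 hs.le)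
          have : (q.den : ℝ) ≤ ⌊s⁻¹⌋₊ + 1 := by exact_mod_cast hden
          linarith
      _ = 1 + s := by field_simp
  · calc |(q.num : ℝ) - α * q.den| = |α - q| * q.den := by
          rw [← abs_of_pos hden0, ← abs_mul, abs_of_pos hden0, sub_mul, Rat.cast_def,
            div_mul_cancel₀ _ hden0.ne', abs_sub_comm]
      _ ≤ 1 / ((⌊s⁻¹⌋₊ + 1 + 1) * q.den) * q.den := by
          gcongr
          exact_mod_cast hdist
      _ = 1 / (⌊s⁻¹⌋₊ + 1 + 1) := by field_simp
      _ ≤ 1 / s⁻¹ := by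
          gcongr
          linarith [Nat.lt_floor_add_one s⁻¹]
      _ = s := by simp

lemma exists_det_eq_one {u v : ℤ} (huv : IsCoprime u v) (hv : 0 < v) :
    ∃ u' v' : ℤ, u * v' - u' * v = 1 ∧ 0 ≤ v' ∧ v' < v := by
  obtain ⟨x, y, hxy⟩ := huv
  refine ⟨-y - u * (x / v), x % v, ?_, Int.emod_nonneg x hv.ne', Int.emod_lt_of_pos x hv⟩
  linear_combination hxy + u * Int.emod_add_mul_ediv x v

lemma abs_sub_mul_le_of_det_eq_one {u v u' v' : ℤ} (α : ℝ) (hdet : u * v' - u' * v = 1)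
    (hv : 0 < v) (hv'0 : 0 ≤ v') (hv'v : v' ≤ v) :
    |u' - α * v'| ≤ |u - α * v| + 1 / v := by
  have hvR : (0 : ℝ) < v := by exact_mod_cast hv
  have hratio0 : (0 : ℝ) ≤ v' / v := by positivity
  have hratio1 : (v' / v : ℝ) ≤ 1 := div_le_one_of_le₀ (by exact_mod_cast hv'v) hvR.le
  have hsplit : (u' : ℝ) - α * v' = v' / v * (u - α * v) - 1 / v := by
    have hdetR : (u * v' - u' * v : ℝ) = 1 := by exact_mod_cast hdet
    field_simp
    linear_combination -hdetR
  calc |(u' : ℝ) - α * v'| ≤ |v' / v * (u - α * v)| + |1 / (v : ℝ)| := by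
        rw [hsplit]
        exact abs_sub _ _
    _ = v' / v * |u - α * v| + 1 / v := by
        rw [abs_mul, abs_of_nonneg hratio0, abs_of_pos (one_div_pos.2 hvR)]
    _ ≤ |u - α * v| + 1 / v := by
        gcongr
        exact mul_le_of_le_one_left (abs_nonneg _) hratio1

theorem BadlyApproximable.exists_basis_norm_zoom_le {α : ℝ} (hα : BadlyApproximable α) (ε : ℝ) :
    ∃ C > 0, ∀ δ, 0 < δ → δ ≤ ε → ∃ p q : ℤ × ℤ, p.1 * q.2 - q.1 * p.2 = 1 ∧
      ‖zoom α δ p‖ ≤ C * √δ ∧ ‖zoom α δ q‖ ≤ C * √δ := by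
  obtain ⟨c, hc, hbad⟩ := hα
  refine ⟨1 + √ε + c⁻¹, by positivity, fun δ hδ hδε ↦ ?_⟩
  have hs : 0 < √δ := Real.sqrt_pos.2 hδ
  have hsε : √δ ≤ √ε := Real.sqrt_le_sqrt hδε
  have hcinv : 0 < c⁻¹ := inv_pos.2 hc
  obtain ⟨u, v, hcop, hv, hvs, hdist⟩ := exists_isCoprime_abs_sub_mul_le α hs
  obtain ⟨u', v', hdet, hv'0, hv'v⟩ := exists_det_eq_one hcop hv
  have hvR : (0 : ℝ) < v := by exact_mod_cast hv
  have hinv : 1 / (v : ℝ) ≤ c⁻¹ * √δ := by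
    have : c ≤ v * √δ := (hbad u v hv).trans (by gcongr)
    field_simp
    exact this
  have norm_zoom_le {x y : ℤ} (hy0 : 0 ≤ y) (hyv : y ≤ v)
      (hxy : |x - α * y| ≤ |u - α * v| + 1 / v) :
      ‖zoom α δ (x, y)‖ ≤ (1 + √ε + c⁻¹) * √δ := by
    refine max_le ?_ ?_
    · have : (0 : ℝ) ≤ y := by exact_mod_cast hy0
      change |δ * (y : ℝ)| ≤ _
      rw [abs_of_nonneg (by positivity)]
      calc δ * (y : ℝ) = y * √δ * √δ := by rw [mul_assoc, Real.mul_self_sqrt hδ.le, mul_comm]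
        _ ≤ v * √δ * √δ := by gcongr
        _ ≤ (1 + √ε + c⁻¹) * √δ := by
          gcongr
          linarith
    · calc |x - α * y| ≤ √δ + c⁻¹ * √δ := hxy.trans (add_le_add hdist hinv)
        _ = (1 + 0 + c⁻¹) * √δ := by ring
        _ ≤ _ := by gcongr; exact Real.sqrt_nonneg ε
  exact ⟨(u, v), (u', v'), hdet,
    norm_zoom_le hv.le le_rfl (le_add_of_nonneg_right (one_div_pos.2 hvR).le),
    norm_zoom_le hv'0 hv'v.le (abs_sub_mul_le_of_det_eq_one α hdet hv hv'0 hv'v.le)⟩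

end Basis

section Sector

/-- The integer points `(u, v)` with `0 < u - α v ≤ δ v` and `v ≤ V`, that is, `0 < u / v - α ≤ δ`
and `v ≤ V`. -/
def sector (α δ V : ℝ) : Set (ℤ × ℤ) :=
  {z | 0 < (z.1 : ℝ) - α * z.2 ∧ (z.1 : ℝ) - α * z.2 ≤ δ * z.2 ∧ (z.2 : ℝ) ≤ V}

variable {α δ V : ℝ} {p q : ℤ × ℤ}

lemma zoom_mem_triangle_iff (hδ : 0 < δ) {z : ℤ × ℤ} :
    zoom α δ z ∈ triangle (δ * V) ↔ z ∈ sector α δ V := by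
  simp [zoom, triangle, sector, mul_le_mul_iff_right₀ hδ]

lemma bijective_smul_add_smul (hpq : p.1 * q.2 - q.1 * p.2 = 1) :
    Function.Bijective fun w : ℤ × ℤ ↦ w.1 • p + w.2 • q := by
  refine Function.bijective_iff_has_inverse.2
    ⟨fun z ↦ (z.1 * q.2 - q.1 * z.2, p.1 * z.2 - z.1 * p.2), fun w ↦ ?_, fun z ↦ ?_⟩
  · ext <;> simp only [Prod.fst_add, Prod.snd_add, Prod.smul_fst, Prod.smul_snd, smul_eq_mul]
    · linear_combination w.1 * hpq
    · linear_combination w.2 * hpq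
  · ext <;> simp only [Prod.fst_add, Prod.snd_add, Prod.smul_fst, Prod.smul_snd, smul_eq_mul]
    · linear_combination z.1 * hpq
    · linear_combination z.2 * hpq

lemma exists_linearMap_eq_zoom (hpq : p.1 * q.2 - q.1 * p.2 = 1) (α δ : ℝ) (n : ℕ) :
    ∃ f : ℝ × ℝ →ₗ[ℝ] ℝ × ℝ, LinearMap.det f = -(n ^ 2 * δ) ∧
      ∀ w : ℤ × ℤ, f (w.1, w.2) = zoom α δ (n • (w.1 • p + w.2 • q)) := by
  refine ⟨Matrix.toLin (Module.Basis.finTwoProd ℝ) (Module.Basis.finTwoProd ℝ)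
    !![n * (δ * p.2), n * (δ * q.2); n * (p.1 - α * p.2), n * (q.1 - α * q.2)], ?_, fun w ↦ ?_⟩
  · have hpqR : (p.1 * q.2 - q.1 * p.2 : ℝ) = 1 := by exact_mod_cast hpq
    rw [LinearMap.det_toLin, Matrix.det_fin_two_of]
    linear_combination (-(n ^ 2 * δ) : ℝ) * hpqR
  · ext <;>
      simp only [Matrix.toLin_finTwoProd_apply, zoom, AddMonoidHom.mk'_apply, Prod.fst_add,
        Prod.snd_add, Prod.smul_fst, Prod.smul_snd, smul_eq_mul,
        ← Nat.cast_smul_eq_nsmul ℤ, Int.cast_add, Int.cast_mul, Int.cast_natCast] <;>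
      ring

lemma finite_sector (α : ℝ) (hδ : 0 < δ) (hV : 0 ≤ V) : (sector α δ V).Finite := by
  obtain ⟨f, hdet, hf⟩ := exists_linearMap_eq_zoom (p := (1, 0)) (q := (0, 1)) (by simp) α δ 1
  refine (finite_triangle (f := f) (by simp [hdet, hδ.ne']) 0 (mul_nonneg hδ.le hV)).subset
    fun z hz ↦ ?_
  simpa [hf, zoom_mem_triangle_iff hδ] using hz

lemma abs_ncard_coset_sub_le (hpq : p.1 * q.2 - q.1 * p.2 = 1) (hδ : 0 < δ) (hV : 0 ≤ V)
    {M : ℝ} (hp : ‖zoom α δ p‖ ≤ M) (hq : ‖zoom α δ q‖ ≤ M) {n : ℕ} (hn : n ≠ 0) (c : ℤ × ℤ) :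
    |({z | n • z + c ∈ sector α δ V}.ncard : ℝ) - δ * V ^ 2 / (2 * n ^ 2)| ≤
      8 * V * M / n + 32 * M ^ 2 / δ := by
  obtain ⟨f, hdet, hf⟩ := exists_linearMap_eq_zoom hpq α δ n
  have hdetabs : |LinearMap.det f| = n ^ 2 * δ := by
    rw [hdet, abs_neg, abs_of_pos (by positivity)]
  have hpre : {w : ℤ × ℤ | f (w.1, w.2) + zoom α δ c ∈ triangle (δ * V)} =
      (fun w : ℤ × ℤ ↦ w.1 • p + w.2 • q) ⁻¹' {z | n • z + c ∈ sector α δ V} := by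
    ext w
    simp only [hf, ← map_add, zoom_mem_triangle_iff hδ, Set.mem_ofPred_eq, Set.mem_preimage]
  have hbij := bijective_smul_add_smul hpq
  have hcard := congrArg Set.ncard hpre
  rw [Set.ncard_preimage_of_injective_subset_range hbij.1 (by
    rw [hbij.2.range_eq]
    exact Set.subset_univ _)] at hcard
  have hκ : ‖f (1, 0)‖ + ‖f (0, 1)‖ ≤ 2 * n * M := by
    have h1 : f (1, 0) = n • zoom α δ p := by
      rw [← map_nsmul]
      simpa using hf (1, 0)
    have h2 : f (0, 1) = n • zoom α δ q := by
      rw [← map_nsmul]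
      simpa using hf (0, 1)
    rw [h1, h2]
    calc _ ≤ n * ‖zoom α δ p‖ + n * ‖zoom α δ q‖ := add_le_add norm_nsmul_le norm_nsmul_le
      _ ≤ n * M + n * M := by gcongr
      _ = 2 * n * M := by ring
  have hcount := abs_ncard_triangle_sub_le (by rw [hdet]; simp [hn, hδ.ne']) (zoom α δ c) hκ
    (mul_nonneg hδ.le hV)
  rw [hcard, hdetabs] at hcount
  convert hcount using 1
  · congr 2
    field_simp
  · field_simp
    ring

end Sector

section FiniteIndex

variable {Λ : AddSubgroup (ℤ × ℤ)} {m : ℕ}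

/-- Coordinatewise reduction modulo `m`. -/
def residue (m : ℕ) : ℤ × ℤ →+ ZMod m × ZMod m :=
  (Int.castAddHom (ZMod m)).prodMap (Int.castAddHom (ZMod m))

lemma residue_surjective (m : ℕ) : Function.Surjective (residue m) :=
  Prod.map_surjective.2 ⟨ZMod.intCast_surjective, ZMod.intCast_surjective⟩

lemma residue_eq_residue_iff {z c : ℤ × ℤ} :
    residue m z = residue m c ↔ ∃ w, m • w + c = z := by
  change ((z.1 : ZMod m), (z.2 : ZMod m)) = ((c.1 : ZMod m), (c.2 : ZMod m)) ↔ _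
  rw [eq_comm, Prod.mk_inj, ZMod.intCast_eq_intCast_iff_dvd_sub,
    ZMod.intCast_eq_intCast_iff_dvd_sub]
  constructor
  · rintro ⟨⟨x, hx⟩, ⟨y, hy⟩⟩
    exact ⟨(x, y), by ext <;> simp [← hx, ← hy]⟩
  · rintro ⟨w, rfl⟩
    exact ⟨⟨w.1, by simp⟩, ⟨w.2, by simp⟩⟩

lemma ncard_residue_class (hm : m ≠ 0) (S : Set (ℤ × ℤ)) (c : ℤ × ℤ) :
    {z ∈ S | residue m z = residue m c}.ncard = {z | m • z + c ∈ S}.ncard := by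
  have hinj : Function.Injective fun z : ℤ × ℤ ↦ m • z + c :=
    (add_left_injective c).comp (nsmul_right_injective hm)
  rw [← Set.ncard_image_of_injective {z | m • z + c ∈ S} hinj]
  congr 1
  ext z
  rw [Set.mem_ofPred_eq, residue_eq_residue_iff]
  constructor
  · rintro ⟨hz, w, rfl⟩
    exact ⟨w, hz, rfl⟩
  · rintro ⟨w, hw, rfl⟩
    exact ⟨hw, w, rfl⟩

lemma ker_residue_index_le (Λ : AddSubgroup (ℤ × ℤ)) : (residue Λ.index).ker ≤ Λ := by
  intro z hz
  rw [AddMonoidHom.mem_ker, ← map_zero (residue Λ.index), residue_eq_residue_iff] at hz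
  obtain ⟨w, rfl⟩ := hz
  simpa using Λ.nsmul_index_mem w

lemma card_map_residue_index (hΛ : Λ.index ≠ 0) :
    Nat.card (Λ.map (residue Λ.index)) = Λ.index := by
  have hindex : (Λ.map (residue Λ.index)).index = Λ.index := by
    rw [← AddSubgroup.index_comap_of_surjective _ (residue_surjective _),
      AddSubgroup.comap_map_eq_self (ker_residue_index_le Λ)]
  have hmul := (Λ.map (residue Λ.index)).card_mul_index
  rw [hindex, Nat.card_prod, Nat.card_zmod] at hmul
  exact Nat.eq_of_mul_eq_mul_right (Nat.pos_of_ne_zero hΛ) hmul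

lemma abs_ncard_sub_le_of_fiber {X Y : Type*} {T : Set X} (hT : T.Finite) {f : X → Y}
    {R : Finset Y} (hf : Set.MapsTo f T R) {A E : ℝ}
    (h : ∀ y ∈ R, |({x | x ∈ T ∧ f x = y}.ncard : ℝ) - A| ≤ E) :
    |(T.ncard : ℝ) - R.card * A| ≤ R.card * E := by
  classical
  have hfiber (y : Y) :
      (hT.toFinset.filter (f · = y)).card = {x | x ∈ T ∧ f x = y}.ncard := by
    rw [← Set.ncard_coe_finset]
    simp
  have hsum : (T.ncard : ℝ) - R.card * A = ∑ y ∈ R, (({x | x ∈ T ∧ f x = y}.ncard : ℝ) - A) := by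
    rw [Set.ncard_eq_toFinset_card _ hT,
      Finset.card_eq_sum_card_fiberwise (t := R) (f := f) (by simpa using hf)]
    simp [hfiber]
  rw [hsum, ← nsmul_eq_mul, ← Finset.sum_const]
  exact (Finset.abs_sum_le_sum_abs _ _).trans (Finset.sum_le_sum h)

lemma abs_ncard_subgroup_sub_le (hΛ : Λ.index ≠ 0) {S : Set (ℤ × ℤ)} (hS : S.Finite) {A E : ℝ}
    (hcoset : ∀ c, |({z | Λ.index • z + c ∈ S}.ncard : ℝ) - A| ≤ E) :
    |({z | z ∈ Λ ∧ z ∈ S}.ncard : ℝ) - Λ.index * A| ≤ Λ.index * E := by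
  have : NeZero Λ.index := ⟨hΛ⟩
  set R := (Λ.map (residue Λ.index) : Set (ZMod Λ.index × ZMod Λ.index)).toFinite.toFinset
  have hcard : R.card = Λ.index := by
    rw [← Set.ncard_eq_toFinset_card, ← Nat.card_coe_set_eq]
    exact card_map_residue_index hΛ
  have hfiber (x) (hx : x ∈ R) :
      |({z | z ∈ {z | z ∈ Λ ∧ z ∈ S} ∧ residue Λ.index z = x}.ncard : ℝ) - A| ≤ E := by
    obtain ⟨c, hc, rfl⟩ := (Set.Finite.mem_toFinset _).1 hx
    have hmem (z) (h : residue Λ.index z = residue Λ.index c) : z ∈ Λ := by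
      rw [← sub_add_cancel z c]
      exact Λ.add_mem (ker_residue_index_le Λ (by simp [AddMonoidHom.mem_ker, h])) hc
    convert hcoset c using 4
    rw [← ncard_residue_class hΛ]
    congr 1
    ext z
    exact ⟨fun h ↦ ⟨h.1.2, h.2⟩, fun h ↦ ⟨⟨hmem z h.2, h.1⟩, h.2⟩⟩
  have hmaps : Set.MapsTo (residue Λ.index) {z | z ∈ Λ ∧ z ∈ S} R :=
    fun z hz ↦ (Set.Finite.mem_toFinset _).2 ⟨z, hz.1, rfl⟩
  simpa only [hcard] using abs_ncard_sub_le_of_fiber (hS.subset fun _ hz ↦ hz.2) hmaps hfiber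

theorem BadlyApproximable.exists_abs_ncard_subgroup_sector_sub_le {α : ℝ}
    (hα : BadlyApproximable α) (ε : ℝ) :
    ∃ C ≥ 0, ∀ Λ : AddSubgroup (ℤ × ℤ), Λ.index ≠ 0 → ∀ δ V, 0 < δ → δ ≤ ε → 0 ≤ V →
      |({z | z ∈ Λ ∧ z ∈ sector α δ V}.ncard : ℝ) - δ * V ^ 2 / (2 * Λ.index)| ≤
        C * (√δ * V + Λ.index) := by
  obtain ⟨C, hC, hbasis⟩ := hα.exists_basis_norm_zoom_le ε
  refine ⟨8 * C + 32 * C ^ 2, by positivity, fun Λ hΛ δ V hδ hδε hV ↦ ?_⟩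
  obtain ⟨p, q, hpq, hp, hq⟩ := hbasis δ hδ hδε
  have hcount := abs_ncard_subgroup_sub_le hΛ (finite_sector α hδ hV)
    (abs_ncard_coset_sub_le hpq hδ hV hp hq hΛ)
  have hmain : Λ.index * (δ * V ^ 2 / (2 * (Λ.index : ℝ) ^ 2)) = δ * V ^ 2 / (2 * Λ.index) := by
    field_simp
  rw [hmain] at hcount
  calc _ ≤ _ := hcount
    _ = 8 * C * (√δ * V) + 32 * C ^ 2 * Λ.index := by
      rw [mul_pow, Real.sq_sqrt hδ.le]
      field_simp
    _ ≤ (8 * C + 32 * C ^ 2) * (√δ * V) + (8 * C + 32 * C ^ 2) * Λ.index := by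
      gcongr
      · exact le_add_of_nonneg_right (by positivity)
      · exact le_add_of_nonneg_left (by positivity)
    _ = _ := by ring

end FiniteIndex

section CyclicQuotient

lemma isAddCyclic_quotient_of_gcd_eq_one {Λ : AddSubgroup (ℤ × ℤ)} {p : ℤ × ℤ} (hp : p ∈ Λ)
    (hgcd : Int.gcd p.1 p.2 = 1) : IsAddCyclic ((ℤ × ℤ) ⧸ Λ) := by
  obtain ⟨x, y, hxy⟩ := Int.isCoprime_iff_gcd_eq_one.2 hgcd
  refine ⟨((-y, x) : ℤ × ℤ), fun g ↦ ?_⟩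
  obtain ⟨z, rfl⟩ := QuotientAddGroup.mk_surjective g
  obtain ⟨w, rfl⟩ := (bijective_smul_add_smul (p := p) (q := (-y, x))
    (by linear_combination hxy)).2 z
  refine AddSubgroup.mem_zmultiples_iff.2 ⟨w.2, ?_⟩
  rw [← QuotientAddGroup.mk_zsmul, QuotientAddGroup.eq, add_comm, ← sub_eq_add_neg,
    add_sub_cancel_right]
  exact Λ.zsmul_mem hp w.1

lemma index_comap_nsmul {G : Type*} [AddCommGroup G] {Λ : AddSubgroup G} [IsAddCyclic (G ⧸ Λ)]
    (hΛ : Λ.index ≠ 0) (k : ℕ) :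
    (Λ.comap (nsmulAddMonoidHom k)).index = Λ.index / Λ.index.gcd k := by
  have hker : Λ.comap (nsmulAddMonoidHom k) =
      ((nsmulAddMonoidHom k).comp (QuotientAddGroup.mk' Λ)).ker := by
    ext z
    simp [AddMonoidHom.mem_ker, ← QuotientAddGroup.mk_nsmul]
  have : Finite (G ⧸ Λ) := @AddSubgroup.finite_quotient_of_finiteIndex _ _ _ ⟨hΛ⟩
  rw [hker, AddSubgroup.index_ker, AddMonoidHom.range_comp, QuotientAddGroup.range_mk',
    ← AddMonoidHom.range_eq_map, IsAddCyclic.card_nsmulAddMonoidHom_range,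
    ← AddSubgroup.index_eq_card]

end CyclicQuotient

section Moebius

lemma sum_moebius_dvd {g Y : ℕ} (hg : g ≠ 0) (hgY : g ≤ Y) :
    ∑ k ∈ Finset.Icc 1 Y with k ∣ g, ArithmeticFunction.moebius k = if g = 1 then 1 else 0 := by
  have hdivisors : (Finset.Icc 1 Y).filter (· ∣ g) = g.divisors := by
    ext k
    simp only [Finset.mem_filter, Finset.mem_Icc, Nat.mem_divisors]
    exact ⟨fun h ↦ ⟨h.2, hg⟩, fun h ↦ ⟨⟨Nat.pos_of_dvd_of_pos h.1 (by lia),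
      (Nat.le_of_dvd (by lia) h.1).trans hgY⟩, h.1⟩⟩
  rw [hdivisors, ← ArithmeticFunction.coe_mul_zeta_apply, ArithmeticFunction.moebius_mul_coe_zeta,
    ArithmeticFunction.one_apply]

lemma ncard_dvd_gcd (T : Set (ℤ × ℤ)) {k : ℕ} (hk : k ≠ 0) :
    {z | z ∈ T ∧ k ∣ z.1.gcd z.2}.ncard = {w | k • w ∈ T}.ncard := by
  rw [← Set.ncard_image_of_injective {w | k • w ∈ T} (nsmul_right_injective hk)]
  congr 1
  ext z
  constructor
  · rintro ⟨hz, hkz⟩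
    obtain ⟨x, hx⟩ := Int.natCast_dvd.2 (hkz.trans (Int.gcd_dvd_natAbs_left _ _))
    obtain ⟨y, hy⟩ := Int.natCast_dvd.2 (hkz.trans (Int.gcd_dvd_natAbs_right _ _))
    obtain rfl : k • (x, y) = z := by ext <;> simp [hx, hy]
    exact ⟨(x, y), hz, rfl⟩
  · rintro ⟨w, hw, rfl⟩
    refine ⟨hw, Int.dvd_gcd ?_ ?_⟩ <;> simp

lemma ncard_gcd_eq_one {T : Set (ℤ × ℤ)} (hT : T.Finite) {Y : ℕ}
    (hne : ∀ z ∈ T, z.1.gcd z.2 ≠ 0) (hY : ∀ z ∈ T, z.1.gcd z.2 ≤ Y) :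
    ({z | z ∈ T ∧ z.1.gcd z.2 = 1}.ncard : ℤ) =
      ∑ k ∈ Finset.Icc 1 Y, ArithmeticFunction.moebius k * {w | k • w ∈ T}.ncard := by
  have card_filter (P : ℤ × ℤ → Prop) [DecidablePred P] :
      {z | z ∈ T ∧ P z}.ncard = (hT.toFinset.filter P).card := by
    rw [← Set.ncard_coe_finset]
    simp
  calc ({z | z ∈ T ∧ z.1.gcd z.2 = 1}.ncard : ℤ)
      = ∑ z ∈ hT.toFinset, if z.1.gcd z.2 = 1 then 1 else 0 := by
        rw [card_filter, Finset.card_filter]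
        push_cast
        rfl
    _ = ∑ z ∈ hT.toFinset, ∑ k ∈ Finset.Icc 1 Y,
          if k ∣ z.1.gcd z.2 then ArithmeticFunction.moebius k else 0 := by
        refine Finset.sum_congr rfl fun z hz ↦ ?_
        rw [Set.Finite.mem_toFinset] at hz
        rw [← Finset.sum_filter, sum_moebius_dvd (hne z hz) (hY z hz)]
    _ = ∑ k ∈ Finset.Icc 1 Y, ArithmeticFunction.moebius k * {w | k • w ∈ T}.ncard := by
        rw [Finset.sum_comm]
        refine Finset.sum_congr rfl fun k hk ↦ ?_
        have hk0 : k ≠ 0 := Nat.one_le_iff_ne_zero.1 (Finset.mem_Icc.1 hk).1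
        rw [← ncard_dvd_gcd T hk0, card_filter, ← Finset.sum_filter, Finset.sum_const,
          nsmul_eq_mul, mul_comm]

end Moebius

section Density

/-- The terms of the series that sieves the primitive vectors out of a subgroup of index `d` with
cyclic quotient: multiples of `n` have density `gcd n d / (d * n ^ 2)` there. -/
noncomputable def sieveTerm (d n : ℕ) : ℝ :=
  ArithmeticFunction.moebius n * n.gcd d / (n : ℝ) ^ 2

variable {d : ℕ}

lemma norm_sieveTerm_le (hd : d ≠ 0) (n : ℕ) : ‖sieveTerm d n‖ ≤ d * ((n : ℝ) ^ 2)⁻¹ := by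
  have hmoebius : |(ArithmeticFunction.moebius n : ℝ)| ≤ 1 := by
    exact_mod_cast ArithmeticFunction.abs_moebius_le_one
  have hgcd : (n.gcd d : ℝ) ≤ d := by exact_mod_cast Nat.gcd_le_right n (Nat.pos_of_ne_zero hd)
  rw [sieveTerm, Real.norm_eq_abs, abs_div, abs_mul, Nat.abs_cast, abs_sq, div_eq_mul_inv]
  gcongr
  exact (mul_le_of_le_one_left (Nat.cast_nonneg _) hmoebius).trans hgcd

lemma summable_norm_sieveTerm (hd : d ≠ 0) : Summable (‖sieveTerm d ·‖) :=
  .of_nonneg_of_le (fun _ ↦ norm_nonneg _) (norm_sieveTerm_le hd)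
    ((Real.summable_nat_pow_inv.2 one_lt_two).mul_left _)

lemma abs_tsum_sieveTerm_sub_sum_le (hd : d ≠ 0) (Y : ℕ) :
    |∑' n, sieveTerm d n - ∑ n ∈ Finset.Icc 1 Y, sieveTerm d n| ≤ 2 * d / (Y + 1) := by
  have hpartial : ∑ n ∈ Finset.Icc 1 Y, sieveTerm d n =
      ∑ n ∈ Finset.range (Y + 1), sieveTerm d n := by
    rw [Finset.range_eq_Ico, Finset.sum_eq_sum_Ico_succ_bot Y.succ_pos, sieveTerm]
    simp [Finset.Ico_add_one_right_eq_Icc]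
  have htendsto := ((summable_norm_sieveTerm hd).of_norm.hasSum.tendsto_sum_nat.sub_const
    (∑ n ∈ Finset.Icc 1 Y, sieveTerm d n)).abs
  refine le_of_tendsto htendsto ?_
  filter_upwards [Filter.eventually_ge_atTop (Y + 1)] with N hN
  rw [hpartial, ← Finset.sum_Ico_eq_sub _ hN]
  calc |∑ n ∈ Finset.Ico (Y + 1) N, sieveTerm d n|
      ≤ ∑ n ∈ Finset.Ico (Y + 1) N, d * ((n : ℝ) ^ 2)⁻¹ :=
        (Finset.abs_sum_le_sum_abs _ _).trans (Finset.sum_le_sum fun n _ ↦ norm_sieveTerm_le hd n)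
    _ = d * ∑ n ∈ Finset.Ioo Y N, ((n : ℝ) ^ 2)⁻¹ := by
        rw [Finset.mul_sum]
        rfl
    _ ≤ d * (2 / (Y + 1)) := by
        gcongr
        exact sum_Ioo_inv_sq_le Y N
    _ = 2 * d / (Y + 1) := by ring

lemma hasProd_primes_inv_one_sub_inv_sq :
    HasProd (fun p : Nat.Primes ↦ (1 - ((p : ℝ) ^ 2)⁻¹)⁻¹) (π ^ 2 / 6) := by
  let f : ℕ →*₀ ℝ := invMonoidWithZeroHom.comp
    ((powMonoidWithZeroHom two_ne_zero).comp (Nat.castRingHom ℝ).toMonoidWithZeroHom)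
  have hsum : HasSum f (π ^ 2 / 6) := by
    have hzeta := hasSum_zeta_two
    simp only [one_div] at hzeta
    exact hzeta
  rw [← hsum.tsum_eq]
  exact EulerProduct.eulerProduct_completely_multiplicative_hasProd hsum.summable.norm

lemma tsum_sieveTerm_prime_pow {p : ℕ} (hp : p.Prime) :
    ∑' e, sieveTerm d (p ^ e) = 1 - (p.gcd d : ℝ) / (p : ℝ) ^ 2 := by
  rw [tsum_eq_sum (s := Finset.range 2)]
  · rw [Finset.sum_range_succ, Finset.sum_range_one, pow_zero, pow_one, sieveTerm, sieveTerm,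
      ArithmeticFunction.moebius_apply_one, ArithmeticFunction.moebius_apply_prime hp,
      Nat.gcd_one_left]
    push_cast
    ring
  · intro e he
    rw [Finset.mem_range, not_lt] at he
    simp [sieveTerm, ArithmeticFunction.moebius_apply_prime_pow hp (by lia : e ≠ 0),
      (by lia : e ≠ 1)]

lemma hasProd_sieveTerm (hd : d ≠ 0) :
    HasProd (fun p : Nat.Primes ↦ 1 - ((p : ℕ).gcd d : ℝ) / (p : ℝ) ^ 2)
      (∑' n, sieveTerm d n) := by
  simp_rw [← fun p : Nat.Primes ↦ tsum_sieveTerm_prime_pow (d := d) p.2]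
  refine EulerProduct.eulerProduct_hasProd (by simp [sieveTerm]) (fun {m n} hmn ↦ ?_)
    (summable_norm_sieveTerm hd) (by simp [sieveTerm])
  rw [sieveTerm, sieveTerm, sieveTerm,
    ArithmeticFunction.isMultiplicative_moebius.map_mul_of_coprime hmn, Nat.gcd_comm,
    Nat.Coprime.gcd_mul d hmn, Nat.gcd_comm d m, Nat.gcd_comm d n]
  push_cast
  ring

lemma hasProd_primes_ite_dvd (hd : d ≠ 0) :
    HasProd (fun p : Nat.Primes ↦ if (p : ℕ) ∣ d then (1 + 1 / (p : ℝ))⁻¹ else 1)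
      (∏ p ∈ d.primeFactors, (1 + 1 / (p : ℝ))⁻¹) := by
  let g (p : ℕ) : ℝ := if p ∈ d.primeFactors then (1 + 1 / (p : ℝ))⁻¹ else 1
  have hg : HasProd g (∏ p ∈ d.primeFactors, g p) :=
    hasProd_prod_of_ne_finset_one fun p hp ↦ if_neg hp
  have hsupport : Function.mulSupport g ⊆ {p | p.Prime} := fun p hp ↦ by
    by_contra hprime
    exact hp (if_neg fun h ↦ hprime (Nat.prime_of_mem_primeFactors h))
  have hsub : HasProd (fun p : Nat.Primes ↦ g p) (∏ p ∈ d.primeFactors, g p) :=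
    (hasProd_subtype_iff_of_mulSupport_subset hsupport).2 hg
  convert hsub using 1
  · ext p
    simp [g, hd, p.2]
  · exact Finset.prod_congr rfl fun p hp ↦ (if_pos hp).symm

/-- The density `Θ` of primitive vectors in a subgroup of `ℤ × ℤ` of index `d` that contains a
primitive vector. -/
noncomputable def primitiveDensity (d : ℕ) : ℝ :=
  6 / π ^ 2 * (d : ℝ)⁻¹ * ∏ p ∈ d.primeFactors, (1 + 1 / (p : ℝ))⁻¹

theorem tsum_sieveTerm (hd : d ≠ 0) : ∑' n, sieveTerm d n = d * primitiveDensity d := by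
  have hfactor (p : Nat.Primes) :
      (1 - ((p : ℕ).gcd d : ℝ) / (p : ℝ) ^ 2) * (1 - ((p : ℝ) ^ 2)⁻¹)⁻¹ =
        if (p : ℕ) ∣ d then (1 + 1 / (p : ℝ))⁻¹ else 1 := by
    have hp1 : (1 : ℝ) < p := by exact_mod_cast p.2.one_lt
    have hne : 1 - ((p : ℝ) ^ 2)⁻¹ ≠ 0 := (sub_pos.2 (inv_lt_one_of_one_lt₀ (by nlinarith))).ne'
    split_ifs with hpd
    · rw [Nat.gcd_eq_left hpd]
      rw [mul_inv_eq_iff_eq_mul₀ hne, eq_inv_mul_iff_mul_eq₀ (by positivity)]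
      field_simp
      ring
    · rw [(Nat.Prime.coprime_iff_not_dvd p.2).2 hpd, Nat.cast_one, one_div, mul_inv_cancel₀ hne]
  have hprod := (hasProd_sieveTerm hd).mul hasProd_primes_inv_one_sub_inv_sq
  simp_rw [hfactor] at hprod
  rw [primitiveDensity, ← hprod.unique (hasProd_primes_ite_dvd hd)]
  field_simp

end Density

section Primitive

variable {α δ V : ℝ} {Λ : AddSubgroup (ℤ × ℤ)}

lemma snd_pos_of_mem_sector (hδ : 0 < δ) {z : ℤ × ℤ} (hz : z ∈ sector α δ V) : 0 < z.2 := by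
  have := pos_of_mul_pos_right (hz.1.trans_le hz.2.1) hδ.le
  exact_mod_cast this

lemma nsmul_mem_sector_iff {k : ℕ} (hk : k ≠ 0) {z : ℤ × ℤ} :
    k • z ∈ sector α δ V ↔ z ∈ sector α δ (V / k) := by
  have hk0 : (0 : ℝ) < k := by positivity
  obtain ⟨u, v⟩ := z
  simp only [sector, Set.mem_ofPred_eq, Prod.smul_mk, nsmul_eq_mul, Int.cast_mul, Int.cast_natCast]
  rw [mul_left_comm α, mul_left_comm δ, ← mul_sub, mul_pos_iff_of_pos_left hk0,
    mul_le_mul_iff_right₀ hk0, le_div_iff₀' hk0]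

lemma gcd_le_floor_of_mem_sector {c : ℝ} (hc0 : 0 < c)
    (hc : ∀ u v : ℤ, 0 < v → c ≤ v * |u - α * v|) (hδ : 0 < δ) {z : ℤ × ℤ}
    (hz : z ∈ sector α δ V) : z.1.gcd z.2 ≤ ⌊(√c)⁻¹ * (√δ * V)⌋₊ := by
  have hpos := snd_pos_of_mem_sector hδ hz
  obtain ⟨hpos', hle, hV⟩ := hz
  have hposR : (0 : ℝ) < z.2 := by exact_mod_cast hpos
  have hsq : (√c * z.1.gcd z.2) ^ 2 ≤ (√δ * V) ^ 2 := by
    rw [mul_pow, mul_pow, Real.sq_sqrt hc0.le, Real.sq_sqrt hδ.le]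
    calc c * (z.1.gcd z.2 : ℝ) ^ 2 ≤ z.2 * |z.1 - α * z.2| := mul_gcd_sq_le hc _ _ hpos
      _ ≤ z.2 * (δ * z.2) := by rw [abs_of_pos hpos']; gcongr
      _ = δ * z.2 ^ 2 := by ring
      _ ≤ δ * V ^ 2 := by gcongr
  refine Nat.le_floor ?_
  rw [le_inv_mul_iff₀ (Real.sqrt_pos.2 hc0)]
  exact (pow_le_pow_iff_left₀ (by positivity)
    (mul_nonneg (Real.sqrt_nonneg _) (hposR.le.trans hV)) two_ne_zero).1 hsq

lemma abs_moebius_mul_ncard_sub_le {C : ℝ}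
    (hcount : ∀ Λ : AddSubgroup (ℤ × ℤ), Λ.index ≠ 0 → ∀ V, 0 ≤ V →
      |({z | z ∈ Λ ∧ z ∈ sector α δ V}.ncard : ℝ) - δ * V ^ 2 / (2 * Λ.index)| ≤
        C * (√δ * V + Λ.index))
    (hC : 0 ≤ C) (hΛ : Λ.index ≠ 0) [IsAddCyclic ((ℤ × ℤ) ⧸ Λ)] (hV : 0 ≤ V) {k : ℕ} (hk : k ≠ 0) :
    |ArithmeticFunction.moebius k * ({w | k • w ∈ {z | z ∈ Λ ∧ z ∈ sector α δ V}}.ncard : ℝ) -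
      δ * V ^ 2 / (2 * Λ.index) * sieveTerm Λ.index k| ≤ C * (√δ * V * (k : ℝ)⁻¹ + Λ.index) := by
  set Λk := Λ.comap (nsmulAddMonoidHom k)
  have hgcd : Λk.index * Λ.index.gcd k = Λ.index := by
    rw [index_comap_nsmul hΛ, Nat.div_mul_cancel (Nat.gcd_dvd_left _ _)]
  have hΛk : Λk.index ≠ 0 := fun h ↦ hΛ (by rw [← hgcd, h, zero_mul])
  have hindex : (Λk.index : ℝ) ≤ Λ.index := by
    exact_mod_cast Nat.le_of_dvd (Nat.pos_of_ne_zero hΛ) ⟨_, hgcd.symm⟩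
  have hset : {w | k • w ∈ {z | z ∈ Λ ∧ z ∈ sector α δ V}} =
      {w | w ∈ Λk ∧ w ∈ sector α δ (V / k)} := by
    ext w
    exact and_congr Iff.rfl (nsmul_mem_sector_iff hk)
  have hmain : δ * V ^ 2 / (2 * Λ.index) * sieveTerm Λ.index k =
      ArithmeticFunction.moebius k * (δ * (V / k) ^ 2 / (2 * Λk.index)) := by
    have hgcd0 : (Λ.index.gcd k : ℝ) ≠ 0 := by
      exact_mod_cast (Nat.gcd_pos_of_pos_left k (Nat.pos_of_ne_zero hΛ)).ne'
    have hgcdR : (Λ.index : ℝ) = Λk.index * Λ.index.gcd k := by exact_mod_cast hgcd.symm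
    rw [sieveTerm, Nat.gcd_comm, hgcdR]
    field_simp
  have hmoebius : |(ArithmeticFunction.moebius k : ℝ)| ≤ 1 := by
    exact_mod_cast ArithmeticFunction.abs_moebius_le_one
  rw [hset, hmain, ← mul_sub, abs_mul]
  calc _ ≤ _ := mul_le_of_le_one_left (abs_nonneg _) hmoebius
    _ ≤ C * (√δ * (V / k) + Λk.index) := hcount Λk hΛk (V / k) (by positivity)
    _ ≤ C * (√δ * (V / k) + Λ.index) := by gcongr
    _ = _ := by ring

lemma sum_inv_Icc_le (Y : ℕ) : ∑ k ∈ Finset.Icc 1 Y, (k : ℝ)⁻¹ ≤ 1 + Real.log Y := by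
  have h := harmonic_le_one_add_log Y
  rw [harmonic_eq_sum_Icc] at h
  push_cast at h
  exact h

lemma log_one_add_mul_le {s x : ℝ} (hs : 0 ≤ s) (hx : 0 ≤ x) :
    Real.log (1 + s * x) ≤ Real.log (1 + s) + Real.log (1 + x) := by
  rw [← Real.log_mul (by positivity) (by positivity)]
  gcongr
  nlinarith

lemma log_floor_mul_le {s x : ℝ} (hs : 0 ≤ s) (hx : 0 ≤ x) :
    Real.log ⌊s * x⌋₊ ≤ Real.log (1 + s) + Real.log (1 + x) := by
  refine le_trans ?_ (log_one_add_mul_le hs hx)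
  rcases Nat.eq_zero_or_pos ⌊s * x⌋₊ with hfloor | hfloor
  · rw [hfloor, Nat.cast_zero, Real.log_zero]
    exact Real.log_nonneg (le_add_of_nonneg_right (by positivity))
  · gcongr
    linarith [Nat.floor_le (mul_nonneg hs hx)]

lemma abs_ncard_primitive_sub_sum_le {C : ℝ}
    (hcount : ∀ Λ : AddSubgroup (ℤ × ℤ), Λ.index ≠ 0 → ∀ V, 0 ≤ V →
      |({z | z ∈ Λ ∧ z ∈ sector α δ V}.ncard : ℝ) - δ * V ^ 2 / (2 * Λ.index)| ≤
        C * (√δ * V + Λ.index))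
    (hC : 0 ≤ C) (hΛ : Λ.index ≠ 0) [IsAddCyclic ((ℤ × ℤ) ⧸ Λ)] (hδ : 0 < δ) (hV : 0 ≤ V) {Y : ℕ}
    (hY : ∀ z ∈ sector α δ V, z.1.gcd z.2 ≤ Y) :
    |({z | (z ∈ Λ ∧ z ∈ sector α δ V) ∧ z.1.gcd z.2 = 1}.ncard : ℝ) -
      δ * V ^ 2 / (2 * Λ.index) * ∑ k ∈ Finset.Icc 1 Y, sieveTerm Λ.index k| ≤
        C * (√δ * V * (1 + Real.log Y) + Y * Λ.index) := by
  have hmoebius := ncard_gcd_eq_one ((finite_sector α hδ hV).subset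
    (fun z (hz : z ∈ {z | z ∈ Λ ∧ z ∈ sector α δ V}) ↦ hz.2))
    (fun z hz ↦ (Int.gcd_pos_of_ne_zero_right _ (snd_pos_of_mem_sector hδ hz.2).ne').ne')
    (fun z hz ↦ hY z hz.2)
  have hcast := congrArg (Int.cast : ℤ → ℝ) hmoebius
  push_cast at hcast
  calc _ = |∑ k ∈ Finset.Icc 1 Y, (ArithmeticFunction.moebius k *
          ({w | k • w ∈ {z | z ∈ Λ ∧ z ∈ sector α δ V}}.ncard : ℝ) -
          δ * V ^ 2 / (2 * Λ.index) * sieveTerm Λ.index k)| := by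
        rw [Finset.sum_sub_distrib, ← Finset.mul_sum, ← hcast]
        rfl
    _ ≤ ∑ k ∈ Finset.Icc 1 Y, C * (√δ * V * (k : ℝ)⁻¹ + Λ.index) :=
        (Finset.abs_sum_le_sum_abs _ _).trans <| Finset.sum_le_sum fun k hk ↦
          abs_moebius_mul_ncard_sub_le hcount hC hΛ hV
            (Nat.one_le_iff_ne_zero.1 (Finset.mem_Icc.1 hk).1)
    _ = C * (√δ * V * ∑ k ∈ Finset.Icc 1 Y, (k : ℝ)⁻¹ + Y * Λ.index) := by
        rw [← Finset.mul_sum, Finset.sum_add_distrib, ← Finset.mul_sum]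
        simp
    _ ≤ _ := by
        gcongr
        exact sum_inv_Icc_le Y

lemma abs_mul_sum_sieveTerm_sub_le {d : ℕ} (hd : d ≠ 0) {s x : ℝ} (hs : 0 < s) (hx : 0 ≤ x) :
    |x ^ 2 / (2 * d) * ∑ k ∈ Finset.Icc 1 ⌊s * x⌋₊, sieveTerm d k -
      primitiveDensity d * (x ^ 2 / 2)| ≤ s⁻¹ * x := by
  set Y := ⌊s * x⌋₊
  have hdensity : primitiveDensity d * (x ^ 2 / 2) = x ^ 2 / (2 * d) * ∑' n, sieveTerm d n := by
    rw [tsum_sieveTerm hd]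
    field_simp
  rw [hdensity, ← mul_sub, abs_mul, abs_of_nonneg (by positivity), abs_sub_comm]
  calc _ ≤ x ^ 2 / (2 * d) * (2 * d / (Y + 1)) := by
        gcongr
        exact abs_tsum_sieveTerm_sub_sum_le hd Y
    _ = s⁻¹ * x * (s * x / (Y + 1)) := by field_simp
    _ ≤ s⁻¹ * x := by
        refine mul_le_of_le_one_right (by positivity) (div_le_one_of_le₀ ?_ (by positivity))
        exact (Nat.lt_floor_add_one _).le

theorem BadlyApproximable.exists_abs_ncard_primitive_sector_sub_le (hα : BadlyApproximable α)
    (ε : ℝ) :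
    ∃ C ≥ 0, ∀ Λ : AddSubgroup (ℤ × ℤ), Λ.index ≠ 0 → (∃ p ∈ Λ, Int.gcd p.1 p.2 = 1) →
      ∀ δ V, 0 < δ → δ ≤ ε → 0 ≤ V →
        |({z | (z ∈ Λ ∧ z ∈ sector α δ V) ∧ z.1.gcd z.2 = 1}.ncard : ℝ) -
          primitiveDensity Λ.index * ((√δ * V) ^ 2 / 2)| ≤
            C * (√δ * V * (Λ.index + Real.log (1 + √δ * V))) := by
  obtain ⟨C, hC, hcount⟩ := hα.exists_abs_ncard_subgroup_sector_sub_le ε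
  obtain ⟨c, hc0, hc⟩ := hα
  set s := (√c)⁻¹
  have hs : 0 < s := inv_pos.2 (Real.sqrt_pos.2 hc0)
  have hlogs : 0 ≤ Real.log (1 + s) := Real.log_nonneg (by linarith)
  refine ⟨C * (1 + Real.log (1 + s)) + C * s + s⁻¹, by positivity,
    fun Λ hΛ ⟨p, hp, hgcd⟩ δ V hδ hδε hV ↦ ?_⟩
  have : IsAddCyclic ((ℤ × ℤ) ⧸ Λ) := isAddCyclic_quotient_of_gcd_eq_one hp hgcd
  set x := √δ * V
  have hx : 0 ≤ x := by positivity
  have hlogx : 0 ≤ Real.log (1 + x) := Real.log_nonneg (by linarith)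
  have hd : (1 : ℝ) ≤ Λ.index := by exact_mod_cast Nat.one_le_iff_ne_zero.2 hΛ
  have hsum := abs_ncard_primitive_sub_sum_le (fun Λ hΛ V hV ↦ hcount Λ hΛ δ V hδ hδε hV) hC hΛ hδ
    hV fun z hz ↦ gcd_le_floor_of_mem_sector hc0 hc hδ hz
  rw [show δ * V ^ 2 = x ^ 2 by rw [mul_pow, Real.sq_sqrt hδ.le]] at hsum
  calc _ ≤ _ := abs_sub_le _ _ _
    _ ≤ C * (x * (1 + Real.log ⌊s * x⌋₊) + ⌊s * x⌋₊ * Λ.index) + s⁻¹ * x :=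
        add_le_add hsum (abs_mul_sum_sieveTerm_sub_le hΛ hs hx)
    _ ≤ C * (x * (1 + (Real.log (1 + s) + Real.log (1 + x))) + s * x * Λ.index) + s⁻¹ * x := by
        gcongr
        · exact log_floor_mul_le hs.le hx
        · exact Nat.floor_le (by positivity)
    _ ≤ C * (x * ((1 + Real.log (1 + s)) * (Λ.index + Real.log (1 + x))) +
          s * x * (Λ.index + Real.log (1 + x))) + s⁻¹ * x * (Λ.index + Real.log (1 + x)) := by
        refine add_le_add ?_ (le_mul_of_one_le_right (by positivity) (by linarith))
        gcongr
        · nlinarith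
        · exact le_add_of_nonneg_right hlogx
    _ = _ := by ring

end Primitive

section ErrorTerm

lemma mul_rpow_one_sub_sq {B : ℝ} (hB : 0 ≤ B) (r K : ℝ) :
    (K * B ^ (1 - 1 / (2 * r))) ^ 2 = K ^ 2 * B ^ (2 - 1 / r) := by
  rw [mul_pow, ← Real.rpow_mul_natCast hB]
  congr 2
  push_cast
  ring

lemma log_one_add_le_two_mul_sqrt {x : ℝ} (hx : 0 ≤ x) : Real.log (1 + x) ≤ 2 * √x := by
  have hsq : 1 + x ≤ (1 + √x) ^ 2 := by nlinarith [Real.sq_sqrt hx, Real.sqrt_nonneg x]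
  calc Real.log (1 + x) ≤ Real.log ((1 + √x) ^ 2) := by gcongr
    _ = 2 * Real.log (1 + √x) := by rw [Real.log_pow, Nat.cast_two]
    _ ≤ 2 * √x := by linarith [Real.log_le_sub_one_of_pos (x := 1 + √x) (by positivity)]

lemma mul_add_log_le {d x : ℝ} (hd : 1 ≤ d) (hdx : d ≤ x) :
    x * (d + Real.log (1 + x)) ≤ 3 * (x ^ (3 / 2 : ℝ) * d ^ (1 / 2 : ℝ)) := by
  have hx : 0 < x := by linarith
  have hle : d ≤ √x * √d := by
    rw [← Real.sqrt_mul hx.le]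
    exact Real.le_sqrt_of_sq_le (by nlinarith)
  have hlog : Real.log (1 + x) ≤ 2 * (√x * √d) :=
    (log_one_add_le_two_mul_sqrt hx.le).trans <| mul_le_mul_of_nonneg_left
      (le_mul_of_one_le_right (Real.sqrt_nonneg x) (Real.one_le_sqrt.2 hd)) zero_le_two
  have hpow : x ^ (3 / 2 : ℝ) = x * √x := by
    rw [Real.sqrt_eq_rpow, ← Real.rpow_one_add' hx.le (by norm_num)]
    norm_num
  rw [hpow, ← Real.sqrt_eq_rpow d]
  calc _ ≤ x * (3 * (√x * √d)) := by gcongr; linarith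
    _ = _ := by ring

lemma mul_add_log_le_of_index_le {b d : ℕ} (hb : b ≠ 0) (hd0 : d ≠ 0) {K B r : ℝ} (hK : 0 < K)
    (hB : 2 ≤ B) (hd : (b : ℝ) * (d : ℝ) ^ 2 ≤ K ^ 2 * B ^ (2 - 1 / r)) :
    K * B ^ (1 - 1 / (2 * r)) * (d + Real.log (1 + K * B ^ (1 - 1 / (2 * r)))) ≤
      3 / Real.log 2 * (K ^ ((3 : ℝ) / 2) * (b : ℝ) ^ ((1 : ℝ) / 4) * (d : ℝ) ^ ((1 : ℝ) / 2) *
          B ^ ((3 / 4) * (2 - 1 / r)) * Real.log B +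
        K * (b : ℝ) ^ ((3 : ℝ) / 2) * B ^ (1 - 1 / (2 * r)) * Real.log B) := by
  have hB0 : 0 < B := by linarith
  have hb1 : (1 : ℝ) ≤ b := by exact_mod_cast Nat.one_le_iff_ne_zero.2 hb
  have hd1 : (1 : ℝ) ≤ d := by exact_mod_cast Nat.one_le_iff_ne_zero.2 hd0
  have hlog2 : 0 < Real.log 2 := Real.log_pos one_lt_two
  have hlogB : 1 ≤ Real.log B / Real.log 2 :=
    (one_le_div hlog2).2 (Real.log_le_log zero_lt_two hB)
  have hlogB0 : 0 ≤ Real.log B := Real.log_nonneg (by linarith)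
  have hdX : (d : ℝ) ≤ K * B ^ (1 - 1 / (2 * r)) := by
    refine (pow_le_pow_iff_left₀ (by positivity) (by positivity) two_ne_zero).1 ?_
    rw [mul_rpow_one_sub_sq hB0.le]
    exact (le_mul_of_one_le_left (by positivity) hb1).trans hd
  have hpow : (K * B ^ (1 - 1 / (2 * r))) ^ (3 / 2 : ℝ) =
      K ^ (3 / 2 : ℝ) * B ^ ((3 / 4) * (2 - 1 / r)) := by
    rw [Real.mul_rpow hK.le (by positivity), ← Real.rpow_mul hB0.le]
    congr 2
    ring
  have hmain := mul_add_log_le hd1 hdX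
  rw [hpow] at hmain
  set Z := K ^ (3 / 2 : ℝ) * B ^ ((3 / 4) * (2 - 1 / r)) * (d : ℝ) ^ (1 / 2 : ℝ)
  calc _ ≤ 3 * Z := hmain
    _ ≤ 3 * (Z * ((b : ℝ) ^ (1 / 4 : ℝ) * (Real.log B / Real.log 2))) := by
        gcongr
        exact le_mul_of_one_le_right (by positivity)
          (one_le_mul_of_one_le_of_one_le (Real.one_le_rpow hb1 (by norm_num)) hlogB)
    _ = 3 / Real.log 2 * (Z * (b : ℝ) ^ (1 / 4 : ℝ) * Real.log B) := by ring
    _ = 3 / Real.log 2 * (K ^ (3 / 2 : ℝ) * (b : ℝ) ^ (1 / 4 : ℝ) * (d : ℝ) ^ (1 / 2 : ℝ) *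
          B ^ ((3 / 4) * (2 - 1 / r)) * Real.log B) := by ring
    _ ≤ _ := by
        gcongr
        exact le_add_of_nonneg_right (by positivity)

end ErrorTerm

section Zoom

variable {α : ℝ}

lemma setOf_pos_primitive_eq (hα : 0 ≤ α) {δ : ℝ} (hδ : 0 < δ) (V : ℝ)
    (Λ : AddSubgroup (ℤ × ℤ)) :
    {p : ℤ × ℤ | p ∈ Λ ∧ 0 < p.1 ∧ 0 < p.2 ∧ Int.gcd p.1 p.2 = 1 ∧
        0 < (p.1 : ℝ) / p.2 - α ∧ (p.1 : ℝ) / p.2 - α ≤ δ ∧ (p.2 : ℝ) ≤ V} =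
      {z | (z ∈ Λ ∧ z ∈ sector α δ V) ∧ z.1.gcd z.2 = 1} := by
  have hslope {u v : ℝ} (hv : 0 < v) : u / v - α = (u - α * v) / v := by field_simp
  ext ⟨u, v⟩
  simp only [sector, Set.mem_ofPred_eq]
  constructor
  · rintro ⟨hΛ, -, hv, hgcd, hpos, hle, hV⟩
    have hvR : (0 : ℝ) < v := by exact_mod_cast hv
    rw [hslope hvR] at hpos hle
    exact ⟨⟨hΛ, (div_pos_iff_of_pos_right hvR).1 hpos, (div_le_iff₀ hvR).1 hle, hV⟩, hgcd⟩
  · rintro ⟨⟨hΛ, hz⟩, hgcd⟩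
    have hv : 0 < v := snd_pos_of_mem_sector (z := (u, v)) hδ hz
    have hvR : (0 : ℝ) < v := by exact_mod_cast hv
    obtain ⟨hpos, hle, hV⟩ := hz
    have hu : (0 : ℝ) < u := (mul_nonneg hα hvR.le).trans_lt (sub_pos.1 hpos)
    rw [hslope hvR, div_le_iff₀ hvR]
    exact ⟨hΛ, by exact_mod_cast hu, hv, hgcd, div_pos hpos hvR, hle, hV⟩

lemma sqrt_zoom_mul {ε B : ℝ} (hε : 0 ≤ ε) (hB : 0 < B) (r K : ℝ) :
    √(ε * B ^ (-(1 / r))) * (K * B) = √ε * (K * B ^ (1 - 1 / (2 * r))) := by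
  have hexp : 1 - 1 / (2 * r) = -(1 / r) * (1 / 2) + 1 := by ring
  rw [Real.sqrt_mul hε, Real.sqrt_eq_rpow (B ^ _), ← Real.rpow_mul hB.le, hexp,
    Real.rpow_add_one hB.ne']
  ring

theorem stmt_8_general {ε r : ℝ} (hα : BadlyApproximable α) (hα0 : 0 ≤ α) (hε : 0 < ε)
    (hr : 0 < r) :
    ∃ C ≥ 0, ∀ Λ : AddSubgroup (ℤ × ℤ), Λ.index ≠ 0 → (∃ p ∈ Λ, Int.gcd p.1 p.2 = 1) →
      ∀ K B : ℝ, 0 ≤ K → 1 ≤ B →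
      |(Set.ncard {p : ℤ × ℤ | p ∈ Λ ∧ 0 < p.1 ∧ 0 < p.2 ∧ Int.gcd p.1 p.2 = 1 ∧
            0 < (p.1 : ℝ) / p.2 - α ∧ (p.1 : ℝ) / p.2 - α ≤ ε * B ^ (-(1 / r)) ∧
            (p.2 : ℝ) ≤ K * B} : ℝ) -
          primitiveDensity Λ.index * ε * K ^ 2 / 2 * B ^ (2 - 1 / r)| ≤
        C * (K * B ^ (1 - 1 / (2 * r)) *
          (Λ.index + Real.log (1 + K * B ^ (1 - 1 / (2 * r))))) := by
  obtain ⟨C, hC, hcount⟩ := hα.exists_abs_ncard_primitive_sector_sub_le ε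
  have hlogε : 0 ≤ Real.log (1 + √ε) := Real.log_nonneg (by linarith [Real.sqrt_nonneg ε])
  refine ⟨C * √ε * (1 + Real.log (1 + √ε)), by positivity, fun Λ hΛ hprim K B hK hB ↦ ?_⟩
  have hB0 : 0 < B := by linarith
  have hδ : 0 < ε * B ^ (-(1 / r)) := by positivity
  have hδε : ε * B ^ (-(1 / r)) ≤ ε := mul_le_of_le_one_right hε.le
    (Real.rpow_le_one_of_one_le_of_nonpos hB (neg_nonpos.2 (by positivity)))
  have hmain : primitiveDensity Λ.index * ε * K ^ 2 / 2 * B ^ (2 - 1 / r) =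
      primitiveDensity Λ.index * ((√ε * (K * B ^ (1 - 1 / (2 * r)))) ^ 2 / 2) := by
    rw [mul_pow, mul_rpow_one_sub_sq hB0.le, Real.sq_sqrt hε.le]
    ring
  have hcount := hcount Λ hΛ hprim _ (K * B) hδ hδε (by positivity)
  rw [sqrt_zoom_mul hε.le hB0] at hcount
  rw [setOf_pos_primitive_eq hα0 hδ, hmain]
  set X := K * B ^ (1 - 1 / (2 * r))
  have hX : 0 ≤ X := by positivity
  have hlogX : 0 ≤ Real.log (1 + X) := Real.log_nonneg (by linarith)
  have hd : (1 : ℝ) ≤ Λ.index := by exact_mod_cast Nat.one_le_iff_ne_zero.2 hΛ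
  calc _ ≤ C * (√ε * X * (Λ.index + Real.log (1 + √ε * X))) := hcount
    _ ≤ C * (√ε * X * (Λ.index + (Real.log (1 + √ε) + Real.log (1 + X)))) := by
        gcongr
        exact log_one_add_mul_le (Real.sqrt_nonneg ε) hX
    _ ≤ C * (√ε * X * ((1 + Real.log (1 + √ε)) * (Λ.index + Real.log (1 + X)))) := by
        gcongr
        nlinarith
    _ = _ := by ring

end Zoom

/-- Equidistribution count on a finite-index lattice `Λ ⊆ ℤ²` for the zoom at the quadratic
irrational `√(b/a)`: with `Θ(Λ) = (6/π²)·d(Λ)⁻¹·∏_{p ∣ d(Λ)}(1+1/p)⁻¹` and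
`S = #{(u,v) ∈ Λ : u,v > 0, gcd(u,v)=1, 0 < u/v − √(b/a) ≤ ε·B^(−1/r), v ≤ K·B}`, one has
`S = (Θ(Λ)·ε·K²/2)·B^(2−1/r) + O(K^(3/2)·b^(1/4)·d(Λ)^(1/2)·B^((3/4)(2−1/r))·log B
  + K·b^(3/2)·B^(1−1/(2r))·log B)`, uniformly in `Λ`, `K`, `B` subject to the stated
constraints, the implied constant depending only on `a`, `b`, `ε`, `r`. -/
theorem stmt_8 (a b : ℕ) (ha : 0 < a) (hab : a < b) (hcop : Nat.Coprime a b)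
    (hnsq : ¬ IsSquare (a * b)) (ε r : ℝ) (hε : 0 < ε)
    (hr₁ : 1 / 2 < r) (hr₂ : r < 7 / 10) :
    ∃ C : ℝ, ∀ Λ : AddSubgroup (ℤ × ℤ), Λ.index ≠ 0 →
      (∃ p ∈ Λ, Int.gcd p.1 p.2 = 1) →
      ∀ K B : ℝ, 0 < K → B ≥ 2 →
      K ^ 2 * (b : ℝ) ≤ (2 ^ 21 * 162 * ((b : ℝ) / a) * ε ^ 2) ^ (-(2 / 5 : ℝ)) *
        B ^ ((4 / 5) * (1 / r - 1) - (3 / 5) * (2 - 1 / r)) →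
      (b : ℝ) * (Λ.index : ℝ) ^ 2 ≤ K ^ 2 * B ^ (2 - 1 / r) →
      |(Set.ncard {p : ℤ × ℤ | p ∈ Λ ∧ 0 < p.1 ∧ 0 < p.2 ∧ Int.gcd p.1 p.2 = 1 ∧
            0 < (p.1 : ℝ) / p.2 - Real.sqrt ((b : ℝ) / a) ∧
            (p.1 : ℝ) / p.2 - Real.sqrt ((b : ℝ) / a) ≤ ε * B ^ (-(1 / r)) ∧
            (p.2 : ℝ) ≤ K * B} : ℝ) -
          (6 / π ^ 2 * (Λ.index : ℝ)⁻¹ *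
              ∏ p ∈ (Λ.index).primeFactors, (1 + 1 / (p : ℝ))⁻¹) * ε * K ^ 2 / 2 *
            B ^ (2 - 1 / r)| ≤
        C * (K ^ ((3 : ℝ) / 2) * (b : ℝ) ^ ((1 : ℝ) / 4) * (Λ.index : ℝ) ^ ((1 : ℝ) / 2) *
              B ^ ((3 / 4) * (2 - 1 / r)) * Real.log B +
            K * (b : ℝ) ^ ((3 : ℝ) / 2) * B ^ (1 - 1 / (2 * r)) * Real.log B) := by
  obtain ⟨C, hC, hcount⟩ := stmt_8_general (badlyApproximable_sqrt_div hnsq)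
    (Real.sqrt_nonneg _) hε (one_half_pos.trans hr₁)
  refine ⟨C * (3 / Real.log 2), fun Λ hΛ hprim K B hK hB _ hd ↦ ?_⟩
  rw [mul_assoc C]
  exact (hcount Λ hΛ hprim K B hK.le (one_le_two.trans hB)).trans <|
    mul_le_mul_of_nonneg_left (mul_add_log_le_of_index_le (by omega) hΛ hK hB hd) hC
end

section
/- Let D ≥ 2 be a squarefree integer and m a nonzero integer. In the ring ℤ[√D] with norm N(x + y√D) = x² − D·y², let U = {u ∈ ℤ[√D] : N(u) = 1} (a group under multiplication) act on S = {z ∈ ℤ[√D] : N(z) = m} by multiplication. Then this action is free, and the set of orbits of U on S is finite of cardinality at most 3·τ(|m|), where τ denotes the number-of-divisors function. -/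
/-!
Write `z = x + y√D` of norm `m` as `g * (x' + y'√D)` with `x'` and `y'` coprime, and let
`n = |m| / g ^ 2`. Then `y'` is invertible modulo `n`, and `r = x' / y'` is a square root of `D` in
`ZMod n`. If `z` and `w` share the same pair `(g, r)`, then `m` divides `w * star z` and the
quotient is an element of norm one carrying `z` to `w`, so there are at most as many orbits as
pairs.

To count the pairs, let `r` and `s` be square roots of `D` modulo `n`. As `D` is squarefree, `n`
splits as `a * b` with `a` and `b` coprime, `a ∣ 2 * (r - s)` and `b ∣ 2 * (r + s)`. With `s` fixed,
`(a, b)` determines `2 * r`, so `D` has at most two square roots modulo `n` for every coprime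
factorization of `n`. Finally, `(g, (a, b)) ↦ (g * a, g * b)` identifies the coprime factorizations
of all the `|m| / g ^ 2` with the factorizations `|m| = d * e`, sorted by `g = gcd d e`.
-/

open Finset

section SquareRoots

section PrimePower

variable {R : Type*} [CommRing R] [IsDomain R] {p D : R}

theorem prime_pow_dvd_two_of_dvd_two_mul_sqrt (hp : Prime p) (hD : Squarefree D) {r : R} {k : ℕ}
    (hr : p ^ k * p ^ k ∣ r ^ 2 - D) (h2r : p ^ k ∣ 2 * r) : p ^ k ∣ 2 := by
  rcases Nat.eq_zero_or_pos k with rfl | hk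
  · simp
  have hpk : p ∣ p ^ k := dvd_pow_self p hk.ne'
  have hpr : ¬ p ∣ r := fun hpr => hp.not_isUnit <| hD p <| by
    rw [sq] at hr
    exact (dvd_iff_dvd_of_dvd_sub ((mul_dvd_mul hpk hpk).trans hr)).1 (mul_dvd_mul hpr hpr)
  exact hp.pow_dvd_of_dvd_mul_right k hpr h2r

theorem prime_pow_dvd_two_mul_sub_or_add (hp : Prime p) (hD : Squarefree D) {r s : R} {k : ℕ}
    (hr : p ^ k ∣ r ^ 2 - D) (hs : p ^ k ∣ s ^ 2 - D) :
    p ^ k ∣ 2 * (r - s) ∨ p ^ k ∣ 2 * (r + s) := by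
  obtain ⟨q, hq⟩ : p ^ k ∣ (r - s) * (r + s) := by
    convert dvd_sub hr hs using 1
    ring
  obtain ⟨i, j, b, c, rfl, -, hb, hc⟩ := mul_eq_mul_prime_pow hp (hq.trans (mul_comm _ _))
  have hi : p ^ i ∣ r - s := hb ▸ dvd_mul_left _ _
  have hj : p ^ j ∣ r + s := hc ▸ dvd_mul_left _ _
  have h2r : r - s + (r + s) = 2 * r := by ring
  rw [pow_add] at hr ⊢
  -- The smaller of the two powers divides the sum `2 * r`, hence divides `2`.
  rcases le_total i j with hij | hji
  · have hij : p ^ i ∣ p ^ j := pow_dvd_pow p hij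
    have hi2 : p ^ i ∣ 2 := prime_pow_dvd_two_of_dvd_two_mul_sqrt hp hD
      ((mul_dvd_mul_left _ hij).trans hr) (h2r ▸ dvd_add hi (hij.trans hj))
    exact .inr (mul_dvd_mul hi2 hj)
  · have hji : p ^ j ∣ p ^ i := pow_dvd_pow p hji
    have hj2 : p ^ j ∣ 2 := prime_pow_dvd_two_of_dvd_two_mul_sqrt hp hD
      ((mul_dvd_mul_right hji _).trans hr) (h2r ▸ dvd_add (hji.trans hi) hj)
    exact .inl (mul_comm (p ^ i) _ ▸ mul_dvd_mul hj2 hi)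

end PrimePower

theorem exists_coprime_mul_eq_dvd_two_mul {D : ℤ} (hD : Squarefree D) {r s : ℤ} (n : ℕ)
    (hr : (n : ℤ) ∣ r ^ 2 - D) (hs : (n : ℤ) ∣ s ^ 2 - D) :
    ∃ a b : ℕ, a * b = n ∧ a.Coprime b ∧ (a : ℤ) ∣ 2 * (r - s) ∧ (b : ℤ) ∣ 2 * (r + s) := by
  induction n using Nat.recOnPrimeCoprime with
  | zero =>
    have hrs : r ^ 2 = s ^ 2 := by
      rw [Nat.cast_zero, zero_dvd_iff] at hr hs
      linarith
    rcases sq_eq_sq_iff_eq_or_eq_neg.1 hrs with rfl | rfl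
    · exact ⟨0, 1, by simp⟩
    · exact ⟨1, 0, by simp⟩
  | prime_pow p k hp =>
    push_cast at hr hs
    rcases prime_pow_dvd_two_mul_sub_or_add (Nat.prime_iff_prime_int.1 hp) hD hr hs with h | h
    · exact ⟨p ^ k, 1, by simpa using h⟩
    · exact ⟨1, p ^ k, by simpa using h⟩
  | coprime n n' _ _ hnn' ih ih' =>
    push_cast at hr hs
    obtain ⟨a, b, rfl, hco, ha, hb⟩ := ih (dvd_of_mul_right_dvd hr) (dvd_of_mul_right_dvd hs)
    obtain ⟨a', b', rfl, hco', ha', hb'⟩ := ih' (dvd_of_mul_left_dvd hr) (dvd_of_mul_left_dvd hs)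
    simp only [Nat.coprime_mul_iff_left, Nat.coprime_mul_iff_right] at hnn'
    obtain ⟨⟨haa', hba'⟩, hab', hbb'⟩ := hnn'
    refine ⟨a * a', b * b', mul_mul_mul_comm a a' b b',
      (hco.mul_right hab').mul_left (hba'.symm.mul_right hco'), ?_, ?_⟩
    · exact_mod_cast (Nat.isCoprime_iff_coprime.2 haa').mul_dvd ha ha'
    · exact_mod_cast (Nat.isCoprime_iff_coprime.2 hbb').mul_dvd hb hb'

theorem mul_dvd_two_mul_sub_two_mul {R : Type*} [CommRing R] {a b r r' s : R}
    (hab : IsCoprime a b) (ha : a ∣ 2 * (r - s)) (hb : b ∣ 2 * (r + s))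
    (ha' : a ∣ 2 * (r' - s)) (hb' : b ∣ 2 * (r' + s)) : a * b ∣ 2 * r - 2 * r' := by
  have hsub : a ∣ 2 * r - 2 * r' := by simpa [mul_sub] using dvd_sub ha ha'
  have hadd : b ∣ 2 * r - 2 * r' := by simpa [mul_add] using dvd_sub hb hb'
  exact hab.mul_dvd hsub hadd

theorem card_le_of_nsmul_eq {A : Type*} [AddCommGroup A] [IsAddCyclic A] [Finite A] {n : ℕ}
    (hn : 0 < n) {s : Finset A} (hs : ∀ x ∈ s, ∀ y ∈ s, n • x = n • y) : #s ≤ n := by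
  classical
  have := Fintype.ofFinite A
  rcases s.eq_empty_or_nonempty with rfl | ⟨y, hy⟩
  · simp
  calc #s = #(s.image (· - y)) := (card_image_of_injective s sub_left_injective).symm
    _ ≤ #{x : A | n • x = 0} := card_le_card <| image_subset_iff.2 fun x hx => by
      rw [mem_filter_univ, nsmul_sub, hs x hx y hy, sub_self]
    _ ≤ n := IsAddCyclic.card_nsmul_eq_zero_le hn

/-- The ordered factorizations `n = a * b` into coprime factors; there are `2 ^ ω(n)` of them if
`n ≠ 0`, and none if `n = 0`. -/
def coprimeFactorizations (n : ℕ) : Finset (ℕ × ℕ) :=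
  {d ∈ n.divisorsAntidiagonal | d.1.Coprime d.2}

theorem mem_coprimeFactorizations {n a b : ℕ} :
    (a, b) ∈ coprimeFactorizations n ↔ (a * b = n ∧ n ≠ 0) ∧ a.Coprime b := by
  rw [coprimeFactorizations, mem_filter, Nat.mem_divisorsAntidiagonal]

theorem card_sqrt_zmod_le {D : ℤ} (hD : Squarefree D) (n : ℕ) [NeZero n] :
    #{r : ZMod n | r ^ 2 = D} ≤ 2 * #(coprimeFactorizations n) := by
  rcases eq_empty_or_nonempty {r : ZMod n | r ^ 2 = D} with h | ⟨s, hs⟩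
  · simp [h]
  have hdvd {r : ZMod n} (hr : r ∈ ({r : ZMod n | r ^ 2 = D} : Finset _)) :
      (n : ℤ) ∣ (r.cast : ℤ) ^ 2 - D := by
    rw [← ZMod.intCast_zmod_eq_zero_iff_dvd]
    simp [(mem_filter_univ r).1 hr]
  choose! a b hab hco ha hb using fun (r : ZMod n) hr =>
    exists_coprime_mul_eq_dvd_two_mul hD n (hdvd (r := r) hr) (hdvd hs)
  refine card_le_mul_card_image_of_maps_to (f := fun r => (a r, b r)) (fun r hr => ?maps_to) 2
    fun d _ => card_le_of_nsmul_eq two_pos fun r hr r' hr' => ?fiber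
  case maps_to =>
    exact mem_coprimeFactorizations.2 ⟨⟨hab r hr, NeZero.ne n⟩, hco r hr⟩
  case fiber =>
    rw [mem_filter] at hr hr'
    obtain ⟨hr, rfl⟩ := hr
    obtain ⟨hr', hd⟩ := hr'
    obtain ⟨haa', hbb'⟩ := Prod.mk.inj hd
    have h := mul_dvd_two_mul_sub_two_mul (Nat.isCoprime_iff_coprime.2 (hco r hr))
      (ha r hr) (hb r hr) (haa' ▸ ha r' hr') (hbb' ▸ hb r' hr')
    rw [← Nat.cast_mul, hab r hr, ← ZMod.intCast_eq_intCast_iff_dvd_sub] at h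
    simpa using h.symm

end SquareRoots

section Divisors

theorem card_divisorsAntidiagonal_gcd_eq {g : ℕ} (hg : g ≠ 0) (n : ℕ) :
    #{d ∈ (g ^ 2 * n).divisorsAntidiagonal | d.1.gcd d.2 = g} = #(coprimeFactorizations n) := by
  refine (card_nbij (fun d => (g * d.1, g * d.2)) ?_ ?_ ?_).symm
  · rintro ⟨a, b⟩ hd
    obtain ⟨⟨rfl, hn⟩, hab⟩ := mem_coprimeFactorizations.1 hd
    refine mem_filter.2 ⟨Nat.mem_divisorsAntidiagonal.2 ⟨by ring, by positivity⟩, ?_⟩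
    rw [Nat.gcd_mul_left, hab, mul_one]
  · rintro ⟨a, b⟩ - ⟨a', b'⟩ - h
    simpa [hg] using h
  · rintro ⟨d, e⟩ hd
    simp only [mem_coe, mem_filter, Nat.mem_divisorsAntidiagonal] at hd
    obtain ⟨⟨hde, hn⟩, hgcd⟩ := hd
    obtain ⟨a, b, hab, ha, hb⟩ := Nat.exists_coprime d e
    rw [hgcd] at ha hb
    have habn : a * b = n := mul_left_cancel₀ (pow_ne_zero 2 hg) <| by
      rw [← hde, ha, hb]
      ring
    exact ⟨(a, b), mem_coprimeFactorizations.2 ⟨⟨habn, right_ne_zero_of_mul hn⟩, hab⟩,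
      by simp [ha, hb, mul_comm]⟩

/-- The numbers whose square divides `N`, with the convention that there are none for `N = 0`. They
are the possible contents `gcd x y` of an element `x + y√D` of norm `± N`. -/
def sqDivisors (N : ℕ) : Finset ℕ := {g ∈ N.divisors | g ^ 2 ∣ N}

theorem mem_sqDivisors {N g : ℕ} : g ∈ sqDivisors N ↔ g ^ 2 ∣ N ∧ N ≠ 0 := by
  rw [sqDivisors, mem_filter, Nat.mem_divisors]
  exact ⟨fun h => ⟨h.2, h.1.2⟩, fun h => ⟨⟨dvd_of_mul_left_dvd (sq g ▸ h.1), h.2⟩, h.1⟩⟩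

theorem sum_card_coprimeFactorizations (N : ℕ) :
    ∑ g ∈ sqDivisors N, #(coprimeFactorizations (N / g ^ 2)) = #N.divisors := by
  have hgcd : Set.MapsTo (fun d : ℕ × ℕ => d.1.gcd d.2) N.divisorsAntidiagonal (sqDivisors N) := by
    rintro ⟨a, b⟩ hab
    obtain ⟨rfl, hN⟩ := Nat.mem_divisorsAntidiagonal.1 hab
    exact mem_sqDivisors.2
      ⟨sq (a.gcd b) ▸ mul_dvd_mul (Nat.gcd_dvd_left a b) (Nat.gcd_dvd_right a b), hN⟩
  rw [← card_map, Nat.map_div_right_divisors, card_eq_sum_card_fiberwise hgcd]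
  refine sum_congr rfl fun g hg => ?_
  obtain ⟨⟨n, rfl⟩, hN⟩ := mem_sqDivisors.1 hg
  have hg0 : g ^ 2 ≠ 0 := left_ne_zero_of_mul hN
  rw [Nat.mul_div_cancel_left n (Nat.pos_of_ne_zero hg0),
    card_divisorsAntidiagonal_gcd_eq (pow_ne_zero_iff two_ne_zero |>.1 hg0)]

end Divisors

section NormEquation

variable {D : ℤ}

theorem isRegular_of_norm_ne_zero {z : ℤ√D} (hz : z.norm ≠ 0) : IsRegular z := by
  have hreg : IsLeftRegular (star z * z) := fun u v huv =>
    Zsqrtd.eq_of_smul_eq_smul_left hz <| by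
      simpa only [Zsqrtd.norm_eq_mul_conj, mul_comm z] using huv
  exact isLeftRegular_iff_isRegular.1 hreg.of_mul

theorem exists_norm_eq_one_of_dvd_mul_star {m : ℤ} (hm : m ≠ 0) {z w : ℤ√D} (hz : z.norm = m)
    (hw : w.norm = m) (h : (m : ℤ√D) ∣ w * star z) : ∃ u : ℤ√D, u.norm = 1 ∧ w = u * z := by
  obtain ⟨u, hu⟩ := h
  have hwu : w = u * z := Zsqrtd.eq_of_smul_eq_smul_left hm <| by
    rw [← mul_assoc, ← hu, ← hz, Zsqrtd.norm_eq_mul_conj]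
    ring
  refine ⟨u, mul_right_cancel₀ hm ?_, hwu⟩
  calc u.norm * m = (u * z).norm := by rw [Zsqrtd.norm_mul, hz]
    _ = 1 * m := by rw [← hwu, hw, one_mul]

theorem exists_sqrt_zmod_of_dvd_norm {n : ℕ} {z : ℤ√D} (hz : IsCoprime z.re z.im)
    (hn : (n : ℤ) ∣ z.norm) : ∃ r : ZMod n, r ^ 2 = D ∧ (z.re : ZMod n) = r * z.im := by
  have hco : IsCoprime z.im z.norm := by
    rw [Zsqrtd.norm_def, IsCoprime.sub_mul_right_right_iff]
    exact hz.symm.mul_right hz.symm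
  obtain ⟨u, v, huv⟩ := hco.of_isCoprime_of_dvd_right hn
  have huv := congrArg (Int.cast : ℤ → ZMod n) huv
  have hnorm := (ZMod.intCast_zmod_eq_zero_iff_dvd z.norm n).2 hn
  rw [Zsqrtd.norm_def] at hnorm
  push_cast [ZMod.natCast_self] at huv hnorm
  refine ⟨z.re * u, ?_, ?_⟩
  · linear_combination u ^ 2 * hnorm + D * (u * z.im + 1) * huv
  · linear_combination -z.re * huv

theorem natCast_dvd_mul_star_of_re_eq_mul_im {n : ℕ} {r : ZMod n} (hr : r ^ 2 = D) {z w : ℤ√D}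
    (hz : (z.re : ZMod n) = r * z.im) (hw : (w.re : ZMod n) = r * w.im) :
    (n : ℤ√D) ∣ w * star z := by
  rw [← Int.cast_natCast, Zsqrtd.intCast_dvd, ← ZMod.intCast_zmod_eq_zero_iff_dvd,
    ← ZMod.intCast_zmod_eq_zero_iff_dvd]
  simp only [Zsqrtd.re_mul, Zsqrtd.im_mul, Zsqrtd.re_star, Zsqrtd.im_star]
  push_cast
  constructor
  · linear_combination w.re * hz + r * z.im * hw + z.im * w.im * hr
  · linear_combination w.im * hz - z.im * hw

end NormEquation

section NormClass

/-- The classes separating the orbits of elements of `ℤ√D` of norm `± N`: a content `g` and a square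
root of `D` modulo `N / g ^ 2`. -/
abbrev NormClass (D : ℤ) (N : ℕ) : Type :=
  Σ g : sqDivisors N, {r : ZMod (N / (g : ℕ) ^ 2) // r ^ 2 = D}

/-- `z` is in the class `(g, r)` if it is `g` times some `x + y√D` with `x = r * y` modulo
`N / g ^ 2`. Neither `x` and `y` coprime nor `z` of norm `± N` is required here. -/
def HasNormClass {D : ℤ} {N : ℕ} (z : ℤ√D) (c : NormClass D N) : Prop :=
  ∃ z' : ℤ√D, z = ((c.1 : ℕ) : ℤ√D) * z' ∧ (z'.re : ZMod (N / (c.1 : ℕ) ^ 2)) = c.2 * z'.im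

variable {D : ℤ}

theorem exists_hasNormClass {z : ℤ√D} (hz : z.norm ≠ 0) :
    ∃ c : NormClass D z.norm.natAbs, HasNormClass z c := by
  have hg : 0 < Int.gcd z.re z.im := Int.gcd_pos_iff.2 <| by
    contrapose! hz
    simp [Zsqrtd.norm_def, hz]
  obtain ⟨z', hzz', hco⟩ := Zsqrtd.exists_coprime_of_gcd_pos hg
  set g := Int.gcd z.re z.im
  have hnorm : z.norm.natAbs = g ^ 2 * z'.norm.natAbs := by
    rw [hzz', Zsqrtd.norm_mul, Zsqrtd.norm_intCast, Int.natAbs_mul, Int.natAbs_mul,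
      Int.natAbs_natCast, sq]
  obtain ⟨r, hr, hre⟩ := exists_sqrt_zmod_of_dvd_norm (n := z.norm.natAbs / g ^ 2) hco <| by
    rw [hnorm, Nat.mul_div_cancel_left _ (by positivity)]
    exact Int.natAbs_dvd.2 dvd_rfl
  have hgN : g ∈ sqDivisors z.norm.natAbs :=
    mem_sqDivisors.2 ⟨hnorm ▸ dvd_mul_right _ _, Int.natAbs_ne_zero.2 hz⟩
  exact ⟨⟨⟨g, hgN⟩, r, hr⟩, z', by exact_mod_cast hzz', hre⟩

theorem HasNormClass.natCast_dvd_mul_star {N : ℕ} {z w : ℤ√D} {c : NormClass D N}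
    (hz : HasNormClass z c) (hw : HasNormClass w c) : (N : ℤ√D) ∣ w * star z := by
  obtain ⟨⟨g, hg⟩, r, hr⟩ := c
  obtain ⟨z', rfl, hz'⟩ := hz
  obtain ⟨w', rfl, hw'⟩ := hw
  have hN : (N : ℤ√D) = (g : ℤ√D) ^ 2 * (N / g ^ 2 : ℕ) := by
    exact_mod_cast (Nat.mul_div_cancel' (mem_sqDivisors.1 hg).1).symm
  have hfactor : (g : ℤ√D) * w' * star ((g : ℤ√D) * z') = (g : ℤ√D) ^ 2 * (w' * star z') := by
    rw [star_mul, star_natCast]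
    ring
  rw [hN, hfactor]
  exact mul_dvd_mul_left _ (natCast_dvd_mul_star_of_re_eq_mul_im hr hz' hw')

theorem HasNormClass.exists_norm_eq_one {m : ℤ} (hm : m ≠ 0) {z w : ℤ√D}
    {c : NormClass D m.natAbs} (hz : HasNormClass z c) (hw : HasNormClass w c)
    (hzm : z.norm = m) (hwm : w.norm = m) : ∃ u : ℤ√D, u.norm = 1 ∧ w = u * z := by
  refine exists_norm_eq_one_of_dvd_mul_star hm hzm hwm ?_
  have hdvd : ((m.natAbs : ℤ) : ℤ√D) ∣ w * star z :=
    Int.cast_natCast (R := ℤ√D) _ ▸ hz.natCast_dvd_mul_star hw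
  exact ((Zsqrtd.intCast_dvd_intCast m _).2 (Int.dvd_natAbs.2 dvd_rfl)).trans hdvd

instance sqDivisors.neZero_div_sq {N : ℕ} (g : sqDivisors N) : NeZero (N / (g : ℕ) ^ 2) := by
  obtain ⟨hg, hN⟩ := mem_sqDivisors.1 g.2
  exact ⟨(Nat.div_ne_zero_iff_of_dvd hg).2 ⟨hN, ne_zero_of_dvd_ne_zero hN hg⟩⟩

theorem card_normClass_le (hD : Squarefree D) (N : ℕ) :
    Nat.card (NormClass D N) ≤ 2 * #N.divisors := by
  calc Nat.card (NormClass D N)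
      = ∑ g : sqDivisors N, #{r : ZMod (N / (g : ℕ) ^ 2) | r ^ 2 = D} := by
        rw [Nat.card_sigma]
        simp only [Nat.card_eq_fintype_card, Fintype.card_subtype]
    _ ≤ ∑ g : sqDivisors N, 2 * #(coprimeFactorizations (N / (g : ℕ) ^ 2)) :=
        sum_le_sum fun g _ => card_sqrt_zmod_le hD _
    _ = 2 * #N.divisors := by
        rw [← mul_sum, sum_coe_sort (sqDivisors N) fun g => #(coprimeFactorizations (N / g ^ 2)),
          sum_card_coprimeFactorizations]

end NormClass

theorem injective_comp_quot_out {α β : Type*} {s : α → α → Prop} {f : α → β}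
    (h : ∀ a b, f a = f b → s a b) : Function.Injective fun q : Quot s => f q.out := by
  intro q q' hq
  rw [← q.out_eq, ← q'.out_eq]
  exact Quot.sound (h _ _ hq)

theorem stmt_10_general (D : ℤ) (hsf : Squarefree D) (m : ℤ) (hm : m ≠ 0) :
    (∀ u : ℤ√D, u.norm = 1 → (∃ z : ℤ√D, z.norm = m ∧ u * z = z) → u = 1) ∧
    Finite (Quot fun z w : {z : ℤ√D // z.norm = m} =>
      ∃ u : ℤ√D, u.norm = 1 ∧ (w : ℤ√D) = u * (z : ℤ√D)) ∧
    Nat.card (Quot fun z w : {z : ℤ√D // z.norm = m} =>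
      ∃ u : ℤ√D, u.norm = 1 ∧ (w : ℤ√D) = u * (z : ℤ√D)) ≤ 2 * m.natAbs.divisors.card := by
  have hfree (u : ℤ√D) (hu : ∃ z : ℤ√D, z.norm = m ∧ u * z = z) : u = 1 := by
    obtain ⟨z, hz, huz⟩ := hu
    exact (isRegular_of_norm_ne_zero (hz ▸ hm)).right (huz.trans (one_mul z).symm)
  have hclass (z : {z : ℤ√D // z.norm = m}) :
      ∃ c : NormClass D m.natAbs, HasNormClass (z : ℤ√D) c := by
    obtain ⟨z, rfl⟩ := z
    exact exists_hasNormClass hm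
  choose c hc using hclass
  have horbit (z w : {z : ℤ√D // z.norm = m}) (hzw : c z = c w) :
      ∃ u : ℤ√D, u.norm = 1 ∧ (w : ℤ√D) = u * (z : ℤ√D) :=
    (hc z).exists_norm_eq_one hm (hzw ▸ hc w) z.2 w.2
  have hinj := injective_comp_quot_out horbit
  exact ⟨fun u _ => hfree u, .of_injective _ hinj,
    (Nat.card_le_card_of_injective _ hinj).trans (card_normClass_le hsf _)⟩

/-- In `ℤ[√D]` (`D ≥ 2` squarefree), the group of norm-one elements acts freely by
multiplication on the set of elements of norm `m ≠ 0`, and the number of orbits of this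
action is finite and at most `3·τ(|m|)`. -/
theorem stmt_10 (D : ℤ) (hD : 2 ≤ D) (hsf : Squarefree D) (m : ℤ) (hm : m ≠ 0) :
    (∀ u : ℤ√D, u.norm = 1 → (∃ z : ℤ√D, z.norm = m ∧ u * z = z) → u = 1) ∧
    Finite (Quot fun z w : {z : ℤ√D // z.norm = m} =>
      ∃ u : ℤ√D, u.norm = 1 ∧ (w : ℤ√D) = u * (z : ℤ√D)) ∧
    Nat.card (Quot fun z w : {z : ℤ√D // z.norm = m} =>
      ∃ u : ℤ√D, u.norm = 1 ∧ (w : ℤ√D) = u * (z : ℤ√D)) ≤ 3 * m.natAbs.divisors.card := by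
  obtain ⟨hfree, hfin, hcard⟩ := stmt_10_general D hsf m hm
  exact ⟨hfree, hfin, hcard.trans (Nat.mul_le_mul_right _ (by norm_num))⟩
end
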